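/- arXiv:math/0502270 — 2 statements merged into one kernel-verified Lean document; each statement's English description precedes it below -/
import Mathlib

section
/- Let (W,S) be a Coxeter system satisfying: (0) for all s,t ∈ S with m(s,t) even, m(s,t) = 2; (1) for all s ≠ t ∈ S with m(s,t) odd, {s,t} is a maximal spherical subset of S; (2) there is no three-element subset {s,t,u} ⊆ S such that m(s,t) and m(t,u) are both odd; (3) for all s ≠ t ∈ S with m(s,t) odd, the number of maximal spherical subsets of S intersecting {s,t} is at most two. Let (W',S') be a Coxeter system and suppose there exists a group isomorphism φ : W → W'. Then for each s',t' ∈ S' with m'(s',t') even, m'(s',t') = 2. -/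
/-!
It suffices to show that every element `g` of `W` of finite even order has order two, since this
property is invariant under isomorphism and applies to products of two generators of the target.

**Detecting torsion.** Hypotheses `h0` and `h2` say that `S` is partitioned into odd components of size
at most two, with `m(s,t) ∈ {2, ∞}` between different components. The geometric representation of `W`
is deformed over `ℝ[X]` by replacing the coefficient `2` of an edge with `m(s,t) = ∞` by `X`. It is
faithful (`rep_injective`), and an element of finite order acting trivially modulo `X` is trivial
(`eq_one_of_special_fibre`). Modulo `X` the representation splits over the odd components, so a
nontrivial element of finite order has a nontrivial image under one of the retractions `retr` of `W`
onto the parabolic subgroups of the odd components, which are dihedral of order `2m` with `m` odd, or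
of order two (`exists_retr_ne_one`). Hence there are no elements of order four.

**Excluding order `2k` with `k > 1` odd.** Put `a = g^k` and `b = g²`. Some retraction to a component
`{s, t}` is nontrivial on `b`, hence trivial on `a`, and some retraction to another component, that of
`u`, is nontrivial on `a`. By `h1` and `h3` one of `s, t`, say `t`, satisfies no relation with generators
other than `s` (`free_end`). Therefore `W` has a family of representations `psi` in `PGL₂(ℝ)`
depending on a parameter `w ≠ 0`, with `s` and `t` acting as reflections generating a dihedral group,
the component of `u` acting by `(0 w; 1 0)`, and all other generators acting trivially. At `w = -1` the
image of `u` commutes with everything, which shows that `b` is not identically trivial in `w`; hence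
`b` is nontrivial for some `w > 0`. For `w > 0`, however, the determinant of `a` is negative, and an
involution of negative determinant in `PGL₂(ℝ)` commutes with no nontrivial element of odd order
(`isScal_of_commute`). This contradicts `ab = ba` (`FreeEdge.not_commute`).
-/

/-- The standard parabolic subgroup `W_T` of a Coxeter system, generated by the
simple reflections indexed by `T`. -/
def CoxeterSystem.parabolic {B W : Type*} [Group W] {M : CoxeterMatrix B}
    (cs : CoxeterSystem M W) (T : Set B) : Subgroup W :=
  Subgroup.closure (cs.simple '' T)

/-- `T` is a spherical subset: the parabolic subgroup `W_T` is finite. -/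
def CoxeterSystem.IsSpherical {B W : Type*} [Group W] {M : CoxeterMatrix B}
    (cs : CoxeterSystem M W) (T : Set B) : Prop :=
  Finite (cs.parabolic T)

/-- `T` is a maximal spherical subset: spherical and maximal under inclusion
among spherical subsets. -/
def CoxeterSystem.IsMaxSpherical {B W : Type*} [Group W] {M : CoxeterMatrix B}
    (cs : CoxeterSystem M W) (T : Set B) : Prop :=
  cs.IsSpherical T ∧ ∀ U : Set B, cs.IsSpherical U → T ⊆ U → U = T

/-- The conjugate subgroup `g H g⁻¹`. -/
def conjSubgroup {G : Type*} [Group G] (g : G) (H : Subgroup G) : Subgroup G :=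
  Subgroup.map (MulAut.conj g).toMonoidHom H

/-! ### The generic geometric representation -/

namespace CoxDeform

open Polynomial CoxeterSystem

set_option linter.unusedSectionVars false

noncomputable section

/-- The number `-2 B(αᵢ, αⱼ)`, where `B` is the bilinear form of the geometric representation,
with the value belonging to `m(i,j) = ∞` replaced by an indeterminate. -/
def coef {B : Type*} (M : CoxeterMatrix B) (i j : B) : ℝ[X] :=
  if M i j = 0 then X else C (2 * Real.cos (Real.pi / M i j))

/-- The linear form `v ↦ 2 B(αᵢ, v)`. -/
def coform {B : Type*} [Fintype B] (M : CoxeterMatrix B) (i : B) :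
    Module.Dual ℝ[X] (B → ℝ[X]) :=
  ∑ j, (-coef M i j) • LinearMap.proj j

/-- The simple root `αᵢ`. -/
def root {B : Type*} [DecidableEq B] (i : B) : B → ℝ[X] := Pi.single i 1

variable {B : Type*} [Fintype B] [DecidableEq B] (M : CoxeterMatrix B)

lemma coef_symm (i j : B) : coef M i j = coef M j i := by
  simp [coef, M.symmetric i j]

lemma coef_self (i : B) : coef M i i = -2 := by
  simp [coef, map_ofNat C 2]

lemma coform_apply (i : B) (v : B → ℝ[X]) : coform M i v = -∑ j, coef M i j * v j := by
  simp [coform]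

lemma coform_root (i j : B) : coform M i (root j) = -coef M i j := by
  simp [coform_apply, root, Pi.single_apply]

lemma coform_root_self (i : B) : coform M i (root i) = 2 := by
  simp [coform_root, coef_self]

/-- The generic reflection attached to `i`. -/
def refl (i : B) : (B → ℝ[X]) ≃ₗ[ℝ[X]] (B → ℝ[X]) :=
  Module.reflection (coform_root_self M i)

lemma refl_apply (i : B) (v : B → ℝ[X]) :
    refl M i v = v + (∑ j, coef M i j * v j) • root i := by
  simp [refl, Module.reflection_apply, coform_apply]

lemma refl_root (i j : B) : refl M i (root j) = root j + coef M i j • root i := by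
  simp [refl, Module.reflection_apply, coform_root]

/-- The braid relations hold, by the Chebyshev formula for powers of a product of two
reflections. -/
lemma refl_mul_pow (i j : B) : (refl M i * refl M j) ^ M i j = 1 := by
  rcases eq_or_ne i j with rfl | hij
  · have : refl M i * refl M i = 1 := by
      ext1 v
      exact Module.involutive_reflection (coform_root_self M i) v
    simp [this]
  by_cases h0 : M i j = 0
  · simp [h0]
  have h1 := M.off_diagonal i j hij
  set m := M i j with hm
  set θ : ℝ := Real.pi / m with hθ
  have hc : coef M i j = C (2 * Real.cos θ) := by simp [coef, ← hm, h0, hθ]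
  have hmpos : (0 : ℝ) < m := by exact_mod_cast Nat.pos_of_ne_zero h0
  have hmθ : m * θ = Real.pi := by rw [hθ]; field_simp
  by_cases h2 : m = 2
  · have hz : coef M i j = 0 := by
      rw [hc, hθ, h2]; simp
    have hz' : coef M j i = 0 := by rw [coef_symm, hz]
    have hcomm : (refl M i * refl M j) ^ 2 = 1 := by
      apply LinearEquiv.toLinearMap_injective
      apply LinearMap.ext
      intro v
      have e1 : coform M i (root j) = 0 := by rw [coform_root, hz, neg_zero]
      have e2 : coform M j (root i) = 0 := by rw [coform_root, hz', neg_zero]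
      have e3 := coform_root_self M i
      have e4 := coform_root_self M j
      simp only [pow_two, LinearEquiv.coe_coe, LinearEquiv.mul_apply, refl,
        Module.reflection_apply, map_sub, map_smul, e1, e2, e3, e4, LinearEquiv.coe_one, id]
      module
    rw [h2]; exact hcomm
  have h3 : 3 ≤ m := by omega
  have hs : Real.sin (2 * θ) ≠ 0 := by
    apply ne_of_gt
    have h3' : (3 : ℝ) ≤ m := by exact_mod_cast h3
    have hθpos : 0 < θ := by positivity
    apply Real.sin_pos_of_pos_of_lt_pi
    · positivity
    · rw [← hmθ]; nlinarith
  have ht : C (2 * Real.cos (2 * θ)) = coform M i (root j) * coform M j (root i) - 2 := by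
    rw [coform_root, coform_root, coef_symm M j i, hc, Real.cos_two_mul]
    simp only [map_mul, map_sub, map_ofNat, map_pow, map_one]
    ring
  have hS (n : ℤ) : (Chebyshev.S ℝ[X] n).eval (C (2 * Real.cos (2 * θ))) =
      C (Real.sin ((n + 1) * (2 * θ)) / Real.sin (2 * θ)) := by
    have := Chebyshev.algebraMap_eval_S (R' := ℝ[X]) (2 * Real.cos (2 * θ)) n
    simp only [← Polynomial.C_eq_algebraMap] at this
    rw [← this, ← Chebyshev.S_two_mul_real_cos, mul_div_cancel_right₀ _ hs]
  apply LinearEquiv.toLinearMap_injective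
  have key := Module.reflection_mul_reflection_pow (coform_root_self M i) (coform_root_self M j) m _ ht
  have hz1 : (Chebyshev.S ℝ[X] (((m : ℤ) - 2) / 2)).eval (C (2 * Real.cos (2 * θ))) *
    ((Chebyshev.S ℝ[X] (((m : ℤ) - 1) / 2)).eval (C (2 * Real.cos (2 * θ))) +
      (Chebyshev.S ℝ[X] (((m : ℤ) - 3) / 2)).eval (C (2 * Real.cos (2 * θ)))) = 0 := by
    rcases Nat.even_or_odd' m with ⟨k, hk | hk⟩
    · have : ((m : ℤ) - 2) / 2 = k - 1 := by omega
      rw [this, hS]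
      have : (((k - 1 : ℤ) : ℝ) + 1) * (2 * θ) = Real.pi := by
        rw [← hmθ, hk]; push_cast; ring
      rw [this]; simp
    · have e1 : ((m : ℤ) - 1) / 2 = k := by omega
      have e2 : ((m : ℤ) - 3) / 2 = k - 1 := by omega
      rw [e1, e2, hS, hS, hS, ← C_add, ← add_div]
      have hk' : Real.pi = (2 * k + 1) * θ := by rw [← hmθ, hk]; push_cast; ring
      have e3 : (((k : ℤ) : ℝ) + 1) * (2 * θ) = Real.pi + θ := by rw [hk']; push_cast; ring
      have e4 : (((k - 1 : ℤ) : ℝ) + 1) * (2 * θ) = Real.pi - θ := by rw [hk']; push_cast; ring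
      rw [e3, e4, Real.sin_pi_sub, add_comm, Real.sin_add]
      simp
  have hz2 : (Chebyshev.S ℝ[X] (((m : ℤ) - 1) / 2)).eval (C (2 * Real.cos (2 * θ))) *
    ((Chebyshev.S ℝ[X] ((m : ℤ) / 2)).eval (C (2 * Real.cos (2 * θ))) +
      (Chebyshev.S ℝ[X] (((m : ℤ) - 2) / 2)).eval (C (2 * Real.cos (2 * θ)))) = 0 := by
    rcases Nat.even_or_odd' m with ⟨k, hk | hk⟩
    · have : ((m : ℤ) - 1) / 2 = k - 1 := by omega
      rw [this, hS]
      have : (((k - 1 : ℤ) : ℝ) + 1) * (2 * θ) = Real.pi := by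
        rw [← hmθ, hk]; push_cast; ring
      rw [this]; simp
    · have e1 : (m : ℤ) / 2 = k := by omega
      have e2 : ((m : ℤ) - 2) / 2 = k - 1 := by omega
      rw [e1, e2, hS, hS, hS, ← C_add, ← add_div]
      have hk' : Real.pi = (2 * k + 1) * θ := by rw [← hmθ, hk]; push_cast; ring
      have e3 : (((k : ℤ) : ℝ) + 1) * (2 * θ) = Real.pi + θ := by rw [hk']; push_cast; ring
      have e4 : (((k - 1 : ℤ) : ℝ) + 1) * (2 * θ) = Real.pi - θ := by rw [hk']; push_cast; ring
      rw [e3, e4, Real.sin_pi_sub, add_comm (Real.sin _), Real.sin_add]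
      simp
  rw [hz1, hz2] at key
  simp only [zero_smul, add_zero] at key
  exact key

variable {W : Type*} [Group W] {M} (cs : CoxeterSystem M W)

/-- The geometric representation of `W` over `ℝ[X]`, the indeterminate standing for the entries
`m(i,j) = ∞`. -/
def rep : W →* ((B → ℝ[X]) ≃ₗ[ℝ[X]] (B → ℝ[X])) :=
  cs.lift ⟨refl M, refl_mul_pow M⟩

@[simp] lemma rep_simple (i : B) : rep cs (cs.simple i) = refl M i :=
  cs.lift_apply_simple (refl_mul_pow M) i

lemma rep_alternatingWord (i j : B) (k : ℕ) :
    rep cs (cs.wordProd (alternatingWord i j k)) (root i) =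
      if Even k then
        (Chebyshev.S ℝ[X] k).eval (coef M i j) • root i +
          (Chebyshev.S ℝ[X] (k - 1)).eval (coef M i j) • root j
      else
        (Chebyshev.S ℝ[X] k).eval (coef M i j) • root j +
          (Chebyshev.S ℝ[X] (k - 1)).eval (coef M i j) • root i := by
  induction k with
  | zero => simp [alternatingWord]
  | succ k ih =>
    rw [alternatingWord_succ', wordProd_cons, map_mul, LinearEquiv.mul_apply, ih]
    have hS := congrArg (Polynomial.eval (coef M i j)) (Chebyshev.S_add_one ℝ[X] (k : ℤ))
    simp only [eval_sub, eval_mul, eval_X] at hS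
    by_cases hk : Even k
    · have hk' : ¬ Even (k + 1) := by simp [hk, parity_simps]
      simp only [hk, hk', if_true, if_false, rep_simple, map_add, map_smul, refl_root, coef_self,
        coef_symm M j i]
      push_cast
      rw [hS, add_sub_cancel_right]
      module
    · have hk' : Even (k + 1) := by simp [hk, parity_simps]
      simp only [hk, hk', if_true, if_false, rep_simple, map_add, map_smul, refl_root, coef_self]
      push_cast
      rw [hS, add_sub_cancel_right]
      module

/-- At `X = 2`, which gives the usual geometric representation, the Chebyshev values along an edge
with `m(i,j) = ∞` grow linearly. -/
lemma eval_two_S_inf (i j : B) (h : M i j = 0) (n : ℤ) :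
    ((Chebyshev.S ℝ[X] n).eval (coef M i j)).eval 2 = n + 1 := by
  have := Polynomial.hom_eval₂ (Chebyshev.S ℝ[X] n) (RingHom.id _) (Polynomial.evalRingHom (2 : ℝ))
    (coef M i j)
  simp only [RingHom.comp_id, coe_evalRingHom] at this
  rw [Polynomial.eval₂_id] at this
  rw [this, ← Polynomial.eval_map, Chebyshev.map_S]
  simp [coef, h]

lemma eval_two_S_fin (i j : B) (h : M i j ≠ 0) (n : ℤ) :
    ((Chebyshev.S ℝ[X] n).eval (coef M i j)).eval 2 * Real.sin (Real.pi / M i j) =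
      Real.sin ((n + 1) * (Real.pi / M i j)) := by
  have := Polynomial.hom_eval₂ (Chebyshev.S ℝ[X] n) (RingHom.id _) (Polynomial.evalRingHom (2 : ℝ))
    (coef M i j)
  simp only [RingHom.comp_id, coe_evalRingHom] at this
  rw [Polynomial.eval₂_id] at this
  rw [this, ← Polynomial.eval_map, Chebyshev.map_S, ← Chebyshev.S_two_mul_real_cos]
  simp [coef, h]

lemma sin_pi_div_pos {i j : B} (hij : i ≠ j) (h : M i j ≠ 0) :
    0 < Real.sin (Real.pi / M i j) := by
  have h1 := M.off_diagonal i j hij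
  have h2 : (2 : ℝ) ≤ M i j := by exact_mod_cast (by omega : 2 ≤ M i j)
  apply Real.sin_pos_of_pos_of_lt_pi
  · have := Real.pi_pos; positivity
  · rw [div_lt_iff₀ (by linarith)]; nlinarith [Real.pi_pos]

lemma eval_two_S_nonneg {i j : B} (hij : i ≠ j) (k : ℕ) (hk : M i j = 0 ∨ k ≤ M i j) :
    0 ≤ ((Chebyshev.S ℝ[X] (k - 1)).eval (coef M i j)).eval 2 := by
  by_cases h : M i j = 0
  · rw [eval_two_S_inf i j h]; push_cast; simp
  · have hk := hk.resolve_left h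
    have hs := sin_pi_div_pos hij h
    refine nonneg_of_mul_nonneg_left ?_ hs
    rw [eval_two_S_fin i j h]
    have hM : (0 : ℝ) < M i j := by exact_mod_cast Nat.pos_of_ne_zero h
    have hk' : (k : ℝ) ≤ M i j := by exact_mod_cast hk
    have hpi := Real.pi_pos
    apply Real.sin_nonneg_of_nonneg_of_le_pi
    · push_cast; simp only [sub_add_cancel]; positivity
    · push_cast; simp only [sub_add_cancel]
      rw [mul_div_assoc', div_le_iff₀ hM]; nlinarith

lemma simple_pow_apply (i j : B) (k : ℕ) :
    cs.wordProd (alternatingWord i j (2 * k)) = (cs.simple i * cs.simple j) ^ k := by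
  rw [prod_alternatingWord_eq_mul_pow]; simp

/-- The order of `sᵢ sⱼ` is the entry `m(i,j)` of the Coxeter matrix. -/
theorem orderOf_simple_mul (i j : B) : orderOf (cs.simple i * cs.simple j) = M i j := by
  apply Nat.dvd_antisymm
  · exact orderOf_dvd_of_pow_eq_one (cs.simple_mul_simple_pow i j)
  rcases eq_or_ne i j with rfl | hij
  · simp
  set k := orderOf (cs.simple i * cs.simple j) with hk
  have h := rep_alternatingWord cs i j (2 * k)
  rw [simple_pow_apply, hk, pow_orderOf_eq_one, ← hk] at h
  simp only [map_one, even_two, Even.mul_right, if_true] at h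
  have hi := congrFun h i
  have hj := congrFun h j
  simp only [LinearEquiv.coe_one, id, root, Pi.add_apply, Pi.smul_apply, Pi.single_eq_same,
    Pi.single_eq_of_ne hij, Pi.single_eq_of_ne hij.symm, smul_eq_mul, mul_one, mul_zero, add_zero,
    zero_add] at hi hj
  have hj2 := congrArg (Polynomial.eval (2 : ℝ)) hj
  have hi2 := congrArg (Polynomial.eval (2 : ℝ)) hi
  by_cases h0 : M i j = 0
  · rw [eval_two_S_inf i j h0] at hj2
    push_cast at hj2
    simp only [eval_zero, sub_add_cancel] at hj2
    have : k = 0 := by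
      have : (k : ℝ) = 0 := by linarith
      exact_mod_cast this
    rw [h0, this]
  · have hs := sin_pi_div_pos hij h0
    have e1 := eval_two_S_fin i j h0 ((2 * k : ℕ) : ℤ)
    have e2 := eval_two_S_fin i j h0 (((2 * k : ℕ) : ℤ) - 1)
    rw [← hj2] at e2
    rw [← hi2] at e1
    push_cast at e1 e2
    simp only [eval_zero, eval_one, zero_mul, one_mul, sub_add_cancel] at e1 e2
    rw [add_mul, one_mul, Real.sin_add, ← e2, zero_mul, zero_add] at e1
    have e3 : Real.cos (2 * k * (Real.pi / M i j)) = 1 := by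
      nlinarith
    rw [Real.cos_eq_one_iff] at e3
    obtain ⟨n, hn⟩ := e3
    have hM : (M i j : ℝ) ≠ 0 := by exact_mod_cast h0
    have hpi := Real.pi_ne_zero
    field_simp at hn
    have : (k : ℤ) = M i j * n := by
      have : (k : ℝ) = M i j * n := by linarith
      exact_mod_cast this
    exact Int.natCast_dvd_natCast.mp ⟨n, this⟩

/-! ### Faithfulness -/

/-- Nonnegativity of all coordinates after specializing the indeterminate to `2`. -/
def Nonneg (v : B → ℝ[X]) : Prop := ∀ b, 0 ≤ (v b).eval 2

lemma Nonneg.combo {v w : B → ℝ[X]} (hv : Nonneg v) (hw : Nonneg w) {p q : ℝ[X]}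
    (hp : 0 ≤ p.eval 2) (hq : 0 ≤ q.eval 2) : Nonneg (p • v + q • w) := by
  intro b
  simp only [Pi.add_apply, Pi.smul_apply, smul_eq_mul, eval_add, eval_mul]
  exact add_nonneg (mul_nonneg hp (hv b)) (mul_nonneg hq (hw b))

/-- An alternating word in `i, j` of length at least `m(i,j)` ending in `j` is not
`sᵢ`-reduced on the right. -/
lemma length_alternating_mul_le (i j : B) (h : M i j ≠ 0) (d : ℕ) :
    cs.length (cs.wordProd (alternatingWord i j (M i j + d)) * cs.simple i) + 1 ≤ M i j + d := by
  induction d with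
  | zero =>
    have h1 : cs.wordProd (alternatingWord i j (M i j)) =
        cs.wordProd (alternatingWord j i (M i j)) := by
      rw [prod_alternatingWord_eq_prod_alternatingWord_sub _ i j (M i j) (by omega)]
      congr 2; omega
    obtain ⟨k, hk⟩ := Nat.exists_eq_succ_of_ne_zero h
    rw [add_zero, h1, hk, alternatingWord_succ, wordProd_concat, simple_mul_simple_cancel_right]
    have := cs.length_wordProd_le (alternatingWord i j k)
    rw [length_alternatingWord] at this
    omega
  | succ d ih =>
    rw [← add_assoc, alternatingWord_succ', wordProd_cons, mul_assoc]
    have := cs.length_mul_le (cs.simple (if Even (M i j + d) then j else i))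
      (cs.wordProd (alternatingWord i j (M i j + d)) * cs.simple i)
    rw [length_simple] at this
    omega

/-- The fundamental positivity property: `w αᵢ` is nonnegative when `ℓ(w sᵢ) > ℓ(w)`. -/
theorem rep_root_nonneg (n : ℕ) : ∀ (w : W) (i : B), cs.length w = n →
    ¬ cs.IsRightDescent w i → Nonneg (rep cs w (root i)) := by
  induction n using Nat.strong_induction_on with
  | _ n ih =>
  intro w i hn hi
  by_cases hw : w = 1
  · subst hw
    intro b
    simp only [map_one, LinearEquiv.coe_one, id, root, Pi.single_apply]
    split_ifs <;> simp
  obtain ⟨j, hj⟩ := cs.exists_rightDescent_of_ne_one hw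
  have hij : i ≠ j := by rintro rfl; exact hi hj
  -- Split off from `w` the longest possible alternating suffix in `i, j` ending in `j`.
  let P : ℕ → Prop := fun k => ∃ v : W, w = v * cs.wordProd (alternatingWord i j k) ∧
    cs.length w = cs.length v + k
  have hP1 : P 1 := by
    refine ⟨w * cs.simple j, ?_, ?_⟩
    · simp [alternatingWord]
    · rw [isRightDescent_iff] at hj; exact hj.symm
  have hPle : ∀ k, P k → k ≤ n := by
    rintro k ⟨v, -, h⟩; omega
  classical
  obtain ⟨k, hk1, ⟨v, hv, hlen⟩, hkmax⟩ : ∃ k, 1 ≤ k ∧ P k ∧ ¬ P (k + 1) := by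
    refine ⟨Nat.findGreatest P n, Nat.le_findGreatest (hPle 1 hP1) hP1,
      Nat.findGreatest_spec (hPle 1 hP1) hP1, fun h => ?_⟩
    have := Nat.le_findGreatest (hPle _ h) h
    omega
  have hkM : M i j = 0 ∨ k + 1 ≤ M i j := by
    by_contra! hcon
    obtain ⟨h0, hlt⟩ := hcon
    obtain ⟨d, rfl⟩ : ∃ d, k = M i j + d := ⟨k - M i j, by omega⟩
    apply hi
    have h1 := length_alternating_mul_le cs i j h0 d
    have h2 := cs.length_mul_le v (cs.wordProd (alternatingWord i j (M i j + d)) * cs.simple i)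
    rw [← mul_assoc, ← hv] at h2
    unfold IsRightDescent
    omega
  -- Neither letter is a right descent of `v`: the first letter of the suffix by additivity of
  -- lengths, the other one by maximality of the suffix.
  have hfirst : ∀ k' v', w = v' * cs.wordProd (alternatingWord i j (k' + 1)) →
      cs.length w = cs.length v' + (k' + 1) →
      ¬ cs.IsRightDescent v' (if Even k' then j else i) := by
    intro k' v' hv' hl' hd
    rw [isRightDescent_iff] at hd
    rw [alternatingWord_succ', wordProd_cons, ← mul_assoc] at hv'
    have h1 := cs.length_mul_le (v' * cs.simple (if Even k' then j else i))
      (cs.wordProd (alternatingWord i j k'))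
    rw [← hv'] at h1
    have h2 := cs.length_wordProd_le (alternatingWord i j k')
    rw [length_alternatingWord] at h2
    omega
  have hnext : ¬ cs.IsRightDescent v (if Even k then j else i) := by
    intro hd
    rw [isRightDescent_iff] at hd
    apply hkmax
    refine ⟨v * cs.simple (if Even k then j else i), ?_, by omega⟩
    rw [alternatingWord_succ', wordProd_cons, ← mul_assoc, simple_mul_simple_cancel_right, hv]
  obtain ⟨k', rfl⟩ : ∃ k', k = k' + 1 := ⟨k - 1, by omega⟩
  have hprev := hfirst k' v hv hlen
  have hboth : ¬ cs.IsRightDescent v i ∧ ¬ cs.IsRightDescent v j := by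
    by_cases he : Even k'
    · have he' : ¬ Even (k' + 1) := by simp [he, parity_simps]
      simp only [he, he', if_true, if_false] at hprev hnext
      exact ⟨hnext, hprev⟩
    · have he' : Even (k' + 1) := by simp [he, parity_simps]
      simp only [he, he', if_true, if_false] at hprev hnext
      exact ⟨hprev, hnext⟩
  have hvi := ih (cs.length v) (by omega) v i rfl hboth.1
  have hvj := ih (cs.length v) (by omega) v j rfl hboth.2
  have c1 := eval_two_S_nonneg (M := M) hij (k' + 1) (by omega)
  have c2 := eval_two_S_nonneg (M := M) hij (k' + 1 + 1) (by omega)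
  rw [hv, map_mul, LinearEquiv.mul_apply, rep_alternatingWord]
  push_cast at c1 c2 ⊢
  simp only [add_sub_cancel_right] at c1 c2 ⊢
  split_ifs
  · rw [map_add, map_smul, map_smul]; exact hvi.combo hvj c2 c1
  · rw [map_add, map_smul, map_smul]; exact hvj.combo hvi c2 c1

theorem rep_injective : Function.Injective (rep cs) := by
  rw [injective_iff_map_eq_one]
  intro w hw
  by_contra hne
  obtain ⟨i, hi⟩ := cs.exists_rightDescent_of_ne_one hne
  have hd : ¬ cs.IsRightDescent (w * cs.simple i) i :=
    (cs.isRightDescent_iff_not_isRightDescent_mul).mp hi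
  have h := rep_root_nonneg cs _ _ i rfl hd i
  rw [map_mul, hw, one_mul, rep_simple, refl_root, coef_self] at h
  simp [root] at h

/-! ### Torsion is detected at the special fibre -/

/-- An element of finite order acting trivially modulo `X` is trivial: the operator
`P = ∑ₖ gᵏ` satisfies `(g - 1) P = 0`, while `P` reduces to a nonzero integer modulo `X`, hence
has nonzero determinant. -/
theorem eq_one_of_special_fibre (w : W) (n : ℕ) (hn : 0 < n) (hw : w ^ n = 1)
    (h : ∀ i j, (rep cs w (root i) j).eval 0 = (root i j : ℝ[X]).eval 0) : w = 1 := by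
  apply rep_injective cs
  rw [map_one]
  set G : Matrix B B ℝ[X] := LinearMap.toMatrixAlgEquiv' (rep cs w).toLinearMap with hG
  have hGn : G ^ n = 1 := by
    rw [hG, ← map_pow]
    have : ((rep cs w).toLinearMap : Module.End ℝ[X] (B → ℝ[X])) ^ n = 1 := by
      have h1 : rep cs w ^ n = 1 := by rw [← map_pow, hw, map_one]
      have h2 := congrArg LinearEquiv.toLinearMap h1
      rw [← LinearEquiv.automorphismGroup.toLinearMapMonoidHom_apply, map_pow] at h2
      exact h2
    rw [this, map_one]
  have hG0 : (evalRingHom (0 : ℝ)).mapMatrix G = 1 := by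
    ext i j
    have := h j i
    simp only [RingHom.mapMatrix_apply, Matrix.map_apply, hG, LinearMap.toMatrixAlgEquiv'_apply,
      coe_evalRingHom]
    simp only [root] at this
    convert this using 1
    · congr 2
    · by_cases hij : i = j
      · subst hij; simp
      · simp [hij]
  set P := ∑ k ∈ Finset.range n, G ^ k with hP
  have hPdet : P.det ≠ 0 := by
    intro h0
    have h1 := congrArg (evalRingHom (0 : ℝ)) h0
    rw [RingHom.map_det, hP, map_sum] at h1
    simp only [map_pow, hG0, one_pow, Finset.sum_const, Finset.card_range, map_zero] at h1
    rw [← Nat.cast_smul_eq_nsmul ℝ, Matrix.det_smul, Matrix.det_one, mul_one] at h1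
    exact (pow_ne_zero _ (Nat.cast_ne_zero.mpr hn.ne')) h1
  have hprod : (G - 1) * P = 0 := by
    rw [hP, mul_geom_sum, hGn, sub_self]
  have hG1 : G = 1 := by
    have h1 := congrArg (· * P.adjugate) hprod
    simp only [mul_assoc, Matrix.mul_adjugate, zero_mul, mul_smul_comm, mul_one] at h1
    exact sub_eq_zero.mp ((smul_eq_zero.mp h1).resolve_left hPdet)
  apply LinearEquiv.toLinearMap_injective
  apply LinearMap.toMatrixAlgEquiv'.injective
  rw [← hG, hG1]
  exact (map_one LinearMap.toMatrixAlgEquiv').symm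

/-! ### Retractions onto the odd components -/

section Retraction

variable (hT : ∀ i j k, Odd (M i j) → Odd (M j k) → Odd (M i k))

lemma odd_symm {i j : B} (h : Odd (M i j)) : Odd (M j i) := by rwa [M.symmetric]

/-- A map on the generators which is constant `x` on the odd component of `i`, with `x² = 1`, and
trivial elsewhere, satisfies the Coxeter relations. -/
lemma liftable_const {G : Type*} [Group G] (hT : ∀ i j k, Odd (M i j) → Odd (M j k) → Odd (M i k))
    (i : B) (x : G) (hx : x * x = 1) :
    M.IsLiftable (fun j => if Odd (M i j) then x else 1) := by
  intro j k
  by_cases hj : Odd (M i j) <;> by_cases hk : Odd (M i k)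
  · simp [hj, hk, hx]
  · have : Even (M j k) := by
      rw [← Nat.not_odd_iff_even]; exact fun h => hk (hT _ _ _ hj h)
    obtain ⟨r, hr⟩ := this
    simp [hj, hk, hr, ← two_mul, pow_mul, pow_two, hx]
  · have : Even (M j k) := by
      rw [← Nat.not_odd_iff_even]; exact fun h => hj (hT _ _ _ hk (odd_symm h))
    obtain ⟨r, hr⟩ := this
    simp [hj, hk, hr, ← two_mul, pow_mul, pow_two, hx]
  · simp [hj, hk]

lemma liftable_retr (hT : ∀ i j k, Odd (M i j) → Odd (M j k) → Odd (M i k)) (i : B) :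
    M.IsLiftable (fun j => if Odd (M i j) then cs.simple j else 1) := by
  intro j k
  by_cases hj : Odd (M i j) <;> by_cases hk : Odd (M i k)
  · simp [hj, hk]
  · have : Even (M j k) := by
      rw [← Nat.not_odd_iff_even]; exact fun h => hk (hT _ _ _ hj h)
    obtain ⟨r, hr⟩ := this
    simp [hj, hk, hr, ← two_mul, pow_mul]
  · have : Even (M j k) := by
      rw [← Nat.not_odd_iff_even]; exact fun h => hj (hT _ _ _ hk (odd_symm h))
    obtain ⟨r, hr⟩ := this
    simp [hj, hk, hr, ← two_mul, pow_mul]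
  · simp [hj, hk]

/-- The retraction of `W` onto the parabolic subgroup of the odd component of `i`, killing all other
generators. -/
def retr (i : B) : W →* W := cs.lift ⟨_, liftable_retr cs hT i⟩

lemma retr_simple (i j : B) :
    retr cs hT i (cs.simple j) = if Odd (M i j) then cs.simple j else 1 :=
  cs.lift_apply_simple (liftable_retr cs hT i) j

/-- The sign character of the odd component of `i`. -/
def chi (i : B) : W →* ℤˣ := cs.lift ⟨_, liftable_const hT i (-1 : ℤˣ) (by simp)⟩

lemma chi_simple (i j : B) : chi cs hT i (cs.simple j) = if Odd (M i j) then -1 else 1 :=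
  cs.lift_apply_simple (liftable_const hT i (-1 : ℤˣ) (by simp)) j

lemma chi_retr (i : B) (w : W) : chi cs hT i (retr cs hT i w) = chi cs hT i w := by
  have : (chi cs hT i).comp (retr cs hT i) = chi cs hT i := by
    apply cs.ext_simple
    intro j
    simp only [MonoidHom.comp_apply, retr_simple, chi_simple]
    split_ifs with h
    · simp [chi_simple, h]
    · simp
  exact DFunLike.congr_fun this w

lemma retr_eq_of_odd {i j : B} (h : Odd (M i j)) : retr cs hT i = retr cs hT j := by
  apply cs.ext_simple
  intro k
  have : Odd (M i k) ↔ Odd (M j k) := ⟨hT _ _ _ (odd_symm h), hT _ _ _ h⟩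
  simp only [retr_simple, this]

/-- Modulo `X` the representation is a direct sum over the odd components, so that `w αᵢ` only
depends on the retraction of `w` to the component of `i`. -/
lemma rep_retr (hE : ∀ i j, M i j ≠ 0 → Even (M i j) → M i j = 2) (i : B) (w : W) :
    ∀ j, (rep cs w (root i) j).eval 0 = (rep cs (retr cs hT i w) (root i) j).eval 0 ∧
      (¬ Odd (M i j) → (rep cs w (root i) j).eval 0 = 0) := by
  induction w using cs.simple_induction_left with
  | one =>
    intro j
    refine ⟨by simp, fun h => ?_⟩
    have : j ≠ i := by rintro rfl; simp at h
    simp [root, this]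
  | mul_simple_left w k ih =>
    intro j
    by_cases hk : Odd (M i k)
    · have hr : retr cs hT i (cs.simple k * w) = cs.simple k * retr cs hT i w := by
        rw [map_mul, retr_simple, if_pos hk]
      rw [hr, map_mul, map_mul, LinearEquiv.mul_apply, LinearEquiv.mul_apply, rep_simple,
        refl_apply, refl_apply]
      simp only [Pi.add_apply, Pi.smul_apply, smul_eq_mul, eval_add, eval_mul, eval_finsetSum,
        fun l => (ih l).1]
      refine ⟨trivial, fun hj => ?_⟩
      have hjk : j ≠ k := by rintro rfl; exact hj hk
      rw [← (ih j).1, (ih j).2 hj]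
      simp [root, hjk]
    · have hr : retr cs hT i (cs.simple k * w) = retr cs hT i w := by
        rw [map_mul, retr_simple, if_neg hk, one_mul]
      rw [hr, map_mul, LinearEquiv.mul_apply, rep_simple, refl_apply]
      have hz : (∑ l, coef M k l * rep cs w (root i) l).eval 0 = 0 := by
        rw [eval_finsetSum]
        apply Finset.sum_eq_zero
        intro l _
        rw [eval_mul]
        by_cases hl : Odd (M i l)
        · have hkl : ¬ Odd (M k l) := fun h => hk (hT _ _ _ hl (odd_symm h))
          have : (coef M k l).eval 0 = 0 := by
            unfold coef
            split_ifs with h0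
            · simp
            · rw [hE k l h0 (Nat.not_odd_iff_even.mp hkl)]; simp
          rw [this, zero_mul]
        · rw [(ih l).2 hl, mul_zero]
      simp only [Pi.add_apply, Pi.smul_apply, smul_eq_mul, eval_add, eval_mul, hz, zero_mul,
        add_zero]
      exact ih j

theorem exists_retr_ne_one (hE : ∀ i j, M i j ≠ 0 → Even (M i j) → M i j = 2) (w : W) (n : ℕ)
    (hn : 0 < n) (hw : w ^ n = 1) (hne : w ≠ 1) : ∃ i, retr cs hT i w ≠ 1 := by
  by_contra! h
  apply hne
  apply eq_one_of_special_fibre cs w n hn hw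
  intro i j
  rw [(rep_retr cs hT hE i w j).1, h i]
  simp

/-- Description of the image of a retraction as a (possibly degenerate) dihedral group. -/
lemma retr_form (i t : B) (hit : Odd (M i t)) (ht : ∀ j, Odd (M i j) → j = i ∨ j = t) (w : W) :
    ∃ n : ℤ, retr cs hT i w = (cs.simple i * cs.simple t) ^ n ∨
      retr cs hT i w = cs.simple i * (cs.simple i * cs.simple t) ^ n := by
  induction w using cs.simple_induction_left with
  | one => exact ⟨0, by simp⟩
  | mul_simple_left w k ih =>
    obtain ⟨n, hn⟩ := ih
    rw [map_mul, retr_simple]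
    by_cases hk : Odd (M i k)
    · rw [if_pos hk]
      rcases ht k hk with rfl | rfl
      · rcases hn with h | h
        · exact ⟨n, Or.inr (by rw [h])⟩
        · exact ⟨n, Or.inl (by rw [h, simple_mul_simple_cancel_left])⟩
      · rcases hn with h | h
        · refine ⟨1 + n, Or.inr ?_⟩
          rw [h, zpow_one_add]
          simp only [← mul_assoc, simple_mul_simple_self, one_mul]
        · refine ⟨-1 + n, Or.inl ?_⟩
          rw [h, zpow_add, zpow_neg_one, mul_inv_rev, inv_simple, inv_simple, mul_assoc]
    · rw [if_neg hk, one_mul]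
      exact ⟨n, hn⟩

end Retraction

/-! ### Dihedral groups of twice odd order -/

section Dihedral

variable {G : Type*} [Group G] {s r : G} {N : ℕ}

lemma dihedral_conj (hs : s * s = 1) (hsr : s * r * s = r⁻¹) (n : ℤ) :
    s * r ^ n * s = r ^ (-n) := by
  have hs' : s⁻¹ = s := inv_eq_of_mul_eq_one_left hs
  have h := conj_zpow (i := n) (a := s) (b := r)
  rw [hs', hsr] at h
  rw [← h, inv_zpow, zpow_neg]

lemma eq_one_of_coprime_pow {x : G} {m n : ℕ} (h : Nat.Coprime m n) (hm : x ^ m = 1)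
    (hn : x ^ n = 1) : x = 1 := by
  have := Nat.dvd_gcd (orderOf_dvd_of_pow_eq_one hm) (orderOf_dvd_of_pow_eq_one hn)
  rw [h] at this
  exact orderOf_eq_one_iff.mp (Nat.dvd_one.mp this)

lemma zpow_pow_eq_one (hr : r ^ N = 1) (n : ℤ) : (r ^ n) ^ N = 1 := by
  rw [← zpow_natCast, zpow_comm, zpow_natCast, hr, one_zpow]

lemma dihedral_refl_sq (hs : s * s = 1) (hsr : s * r * s = r⁻¹) (n : ℤ) :
    (s * r ^ n) ^ 2 = 1 := by
  rw [pow_two, ← mul_assoc, dihedral_conj hs hsr, ← zpow_add]; simp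

lemma dihedral_sq_of_pow_four (hs : s * s = 1) (hsr : s * r * s = r⁻¹) (hr : r ^ N = 1)
    (hN : Odd N) {x : G} (hx : ∃ n : ℤ, x = r ^ n ∨ x = s * r ^ n) (h4 : x ^ 4 = 1) :
    x ^ 2 = 1 := by
  obtain ⟨n, rfl | rfl⟩ := hx
  · have : r ^ n = 1 := by
      refine eq_one_of_coprime_pow (m := N) (n := 2 ^ 2) ?_ (zpow_pow_eq_one hr n) h4
      exact (Nat.coprime_two_right.mpr hN).pow_right 2
    rw [this, one_pow]
  · exact dihedral_refl_sq hs hsr n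

lemma dihedral_odd (hs : s * s = 1) (hsr : s * r * s = r⁻¹)
    {x : G} (hx : ∃ n : ℤ, x = r ^ n ∨ x = s * r ^ n) {k : ℕ} (hk : Odd k) (hxk : x ^ k = 1) :
    ∃ n : ℤ, x = r ^ n := by
  obtain ⟨n, h | h⟩ := hx
  · exact ⟨n, h⟩
  · refine ⟨0, ?_⟩
    rw [zpow_zero]
    apply eq_one_of_coprime_pow (Nat.coprime_two_right.mpr hk) hxk
    rw [h]; exact dihedral_refl_sq hs hsr n

/-- In a dihedral group of twice odd order no involution commutes with a nontrivial rotation. -/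
lemma dihedral_commute (hs : s * s = 1) (hsr : s * r * s = r⁻¹) (hr : r ^ N = 1)
    (hN : Odd N) {a b : G} (ha : ∃ n : ℤ, a = r ^ n ∨ a = s * r ^ n)
    (hb : ∃ n : ℤ, b = r ^ n ∨ b = s * r ^ n) {k : ℕ} (hk : Odd k) (hbk : b ^ k = 1) (hb1 : b ≠ 1)
    (ha2 : a ^ 2 = 1) (hab : a * b = b * a) : a = 1 := by
  obtain ⟨n, hn⟩ := dihedral_odd hs hsr hb hk hbk
  obtain ⟨l, hl | hl⟩ := ha
  · apply eq_one_of_coprime_pow (Nat.coprime_two_right.mpr hN) _ ha2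
    rw [hl]; exact zpow_pow_eq_one hr l
  · exfalso
    apply hb1
    apply eq_one_of_coprime_pow (Nat.coprime_two_right.mpr hk) hbk
    have h1 : a * b * a = b⁻¹ := by
      rw [hl, hn, mul_assoc, ← mul_assoc _ s, ← zpow_neg]
      have h2 : r ^ n * s = s * r ^ (-n) := by
        rw [← dihedral_conj hs hsr, ← mul_assoc, ← mul_assoc, hs, one_mul]
      rw [h2]
      have h3 : s * r ^ l * (s * r ^ (-n) * r ^ l) = (s * r ^ l * s) * (r ^ (-n) * r ^ l) := by
        simp only [mul_assoc]
      rw [h3, dihedral_conj hs hsr, ← zpow_add, ← zpow_add]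
      congr 1; ring
    rw [hab, mul_assoc, ← pow_two, ha2, mul_one] at h1
    rw [pow_two]; nth_rw 1 [h1]; simp

end Dihedral

/-! ### Maps to an extended triangle group -/

lemma pow_swap {G : Type*} [Group G] {a b : G} {n : ℕ} (h : (a * b) ^ n = 1) :
    (b * a) ^ n = 1 := by
  have : b * a = b * (a * b) * b⁻¹ := by group
  rw [this, conj_pow, h]; simp

/-- The images of the generators under the map from `W` to the group
`⟨x, y, z | x², y², z², (xy)^m, (xz)²⟩`, which folds the odd component of `u` to `z`, sends `s, t` to
`x, y`, and kills the remaining generators. -/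
def triGen {G : Type*} [Group G] (M : CoxeterMatrix B) (s t u : B) (x y z : G) (j : B) : G :=
  if j = s then x else if j = t then y else if Odd (M u j) then z else 1

lemma liftable_triGen {G : Type*} [Group G]
    (hE : ∀ i j, M i j ≠ 0 → Even (M i j) → M i j = 2)
    (hT : ∀ i j k, Odd (M i j) → Odd (M j k) → Odd (M i k))
    {s t u : B} (hst : s ≠ t) (hodd : Odd (M s t))
    (ht : ∀ j, Odd (M s j) → j = s ∨ j = t)
    (hfree : ∀ j, j ≠ s → j ≠ t → M t j = 0)
    {x y z : G} (hx : x * x = 1) (hy : y * y = 1) (hz : z * z = 1)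
    (hxy : (x * y) ^ M s t = 1) (hxz : (x * z) ^ 2 = 1) :
    M.IsLiftable (triGen M s t u x y z) := by
  have fs : triGen M s t u x y z s = x := by simp [triGen]
  have ft : triGen M s t u x y z t = y := by simp [triGen, hst.symm]
  have main : ∀ j k, (j = s ∨ (j = t ∧ k ≠ s) ∨ (j ≠ s ∧ j ≠ t ∧ k ≠ s ∧ k ≠ t)) →
      (triGen M s t u x y z j * triGen M s t u x y z k) ^ M j k = 1 := by
    rintro j k (rfl | ⟨rfl, hk⟩ | ⟨hj1, hj2, hk1, hk2⟩)
    · rw [fs]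
      by_cases hk : k = j
      · subst hk; simp [fs, hx]
      by_cases hk2 : k = t
      · subst hk2; rw [ft, hxy]
      have hev : Even (M j k) := by
        rw [← Nat.not_odd_iff_even]
        intro h
        rcases ht k h with h | h
        · exact hk h
        · exact hk2 h
      by_cases h0 : M j k = 0
      · simp [h0]
      rw [hE j k h0 hev]
      unfold triGen
      rw [if_neg hk, if_neg hk2]
      split_ifs
      · exact hxz
      · simp [pow_two, hx]
    · by_cases hk2 : k = j
      · subst hk2; simp [ft, hy]
      · simp [hfree k hk hk2]
    · unfold triGen
      rw [if_neg hj1, if_neg hj2, if_neg hk1, if_neg hk2]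
      exact liftable_const hT u z hz j k
  intro j k
  by_cases h1 : j = s
  · exact main j k (Or.inl h1)
  by_cases h2 : k = s
  · rw [M.symmetric]; exact pow_swap (main k j (Or.inl h2))
  by_cases h3 : j = t
  · exact main j k (Or.inr (Or.inl ⟨h3, h2⟩))
  by_cases h4 : k = t
  · rw [M.symmetric]; exact pow_swap (main k j (Or.inr (Or.inl ⟨h4, h1⟩)))
  exact main j k (Or.inr (Or.inr ⟨h1, h3, h2, h4⟩))

/-! ### Projective two by two matrices -/

/-- A two by two matrix is scalar. -/
def IsScal {R : Type*} [Zero R] (Y : Matrix (Fin 2) (Fin 2) R) : Prop :=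
  Y 0 1 = 0 ∧ Y 1 0 = 0 ∧ Y 0 0 = Y 1 1

/-- The group `PGL₂(ℝ)`. -/
abbrev PGL : Type := GL (Fin 2) ℝ ⧸ Subgroup.center (GL (Fin 2) ℝ)

lemma IsScal.eq {Y : Matrix (Fin 2) (Fin 2) ℝ} (h : IsScal Y) : Y = Y 0 0 • 1 := by
  obtain ⟨h1, h2, h3⟩ := h
  ext i j
  fin_cases i <;> fin_cases j <;> simp [h1, h2, h3]

lemma mk_eq_one_iff (Y : GL (Fin 2) ℝ) : (QuotientGroup.mk Y : PGL) = 1 ↔ IsScal Y.val := by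
  rw [QuotientGroup.eq_one_iff, Matrix.GeneralLinearGroup.mem_center_iff_val_mem_range_scalar]
  constructor
  · rintro ⟨c, hc⟩
    rw [← hc]
    simp [IsScal]
  · intro h
    refine ⟨Y.val 0 0, ?_⟩
    conv_rhs => rw [h.eq]
    ext i j
    simp [Matrix.scalar_apply, Matrix.diagonal_apply, Matrix.one_apply]

/-- A real matrix `Y` with an odd scalar power which projectively commutes with a projective
involution `A` of negative determinant is scalar: `A` is diagonalizable with two opposite real
eigenvalues, and either `Y` anticommutes with `A`, so that `Y²` is scalar, or `Y` is diagonal in the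
eigenbasis of `A`. -/
lemma isScal_of_commute {A Y : Matrix (Fin 2) (Fin 2) ℝ} (hA : A.det < 0) (hA2 : IsScal (A * A))
    (hY : Y.det ≠ 0) {l : ℝ} (hl : A * Y = l • (Y * A)) {k : ℕ} (hk : Odd k)
    (hYk : IsScal (Y ^ k)) : IsScal Y := by
  have hdet := congrArg Matrix.det hl
  rw [Matrix.det_smul, Matrix.det_mul, Matrix.det_mul, Fintype.card_fin] at hdet
  have hl2 : l ^ 2 = 1 := by
    have hne : A.det * Y.det ≠ 0 := mul_ne_zero hA.ne hY
    have : (l ^ 2 - 1) * (A.det * Y.det) = 0 := by linarith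
    have := (mul_eq_zero.mp this).resolve_right hne
    linarith
  have htr : A 0 0 + A 1 1 = 0 := by
    by_contra hne
    obtain ⟨h1, h2, h3⟩ := hA2
    simp only [Matrix.mul_apply, Fin.sum_univ_two] at h1 h2 h3
    have e1 : A 0 1 = 0 := by
      have : A 0 1 * (A 0 0 + A 1 1) = 0 := by linarith
      exact (mul_eq_zero.mp this).resolve_right hne
    have e2 : A 1 0 = 0 := by
      have : A 1 0 * (A 0 0 + A 1 1) = 0 := by linarith
      exact (mul_eq_zero.mp this).resolve_right hne
    have e3 : A 0 0 - A 1 1 = 0 := by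
      have : (A 0 0 - A 1 1) * (A 0 0 + A 1 1) = 0 := by
        rw [e1, e2] at h3; linarith
      exact (mul_eq_zero.mp this).resolve_right hne
    rw [Matrix.det_fin_two, e1] at hA
    nlinarith [mul_self_nonneg (A 0 0)]
  have h11 : A 1 1 = - A 0 0 := by linarith
  have m00 := congrFun (congrFun hl 0) 0
  have m01 := congrFun (congrFun hl 0) 1
  have m10 := congrFun (congrFun hl 1) 0
  have m11 := congrFun (congrFun hl 1) 1
  simp only [Matrix.mul_apply, Fin.sum_univ_two, Matrix.smul_apply, smul_eq_mul, h11]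
    at m00 m01 m10 m11
  rw [Matrix.det_fin_two, h11] at hA
  set p := A 0 0 with hp
  set q := A 0 1 with hq
  set r := A 1 0 with hr
  obtain ⟨d, hd, hd2⟩ : ∃ d : ℝ, 0 < d ∧ d ^ 2 = p ^ 2 + q * r :=
    ⟨Real.sqrt (p ^ 2 + q * r), Real.sqrt_pos.mpr (by nlinarith), Real.sq_sqrt (by nlinarith)⟩
  have hdne : d ^ 2 ≠ 0 := by positivity
  have hl1 : l = 1 ∨ l = -1 := by simpa using hl2
  rcases hl1 with rfl | rfl
  · set x : ℝ := (p * (Y 0 0 - Y 1 1) + q * Y 1 0 + r * Y 0 1) / (2 * d ^ 2) with hx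
    set y : ℝ := (Y 0 0 + Y 1 1) / 2 with hy
    have hxd : x * d ^ 2 = (p * (Y 0 0 - Y 1 1) + q * Y 1 0 + r * Y 0 1) / 2 := by
      rw [hx]; field_simp
    have y01 : Y 0 1 = x * q := by
      apply mul_right_cancel₀ hdne
      rw [mul_assoc, mul_comm q, ← mul_assoc, hxd, hd2]
      linear_combination (p / 2) * m01 - (q / 2) * m00
    have y10 : Y 1 0 = x * r := by
      apply mul_right_cancel₀ hdne
      rw [mul_assoc, mul_comm r, ← mul_assoc, hxd, hd2]
      linear_combination (-p / 2) * m10 + (r / 2) * m00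
    have y00 : Y 0 0 - Y 1 1 = 2 * (x * p) := by
      apply mul_right_cancel₀ hdne
      rw [mul_assoc, mul_assoc, mul_comm p, ← mul_assoc x, hxd, hd2]
      linear_combination (-r / 2) * m01 + (q / 2) * m10
    have hYA : Y = x • A + y • (1 : Matrix (Fin 2) (Fin 2) ℝ) := by
      ext i j
      fin_cases i <;> fin_cases j <;>
        simp [y01, y10, h11, ← hp, ← hq, ← hr] <;> linarith
    have hAA : A * A = d ^ 2 • (1 : Matrix (Fin 2) (Fin 2) ℝ) := by
      ext i j
      fin_cases i <;> fin_cases j <;>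
        simp [Matrix.mul_apply, Fin.sum_univ_two, h11, ← hp, ← hq, ← hr, hd2] <;> ring
    have hpow : ∀ n : ℕ, Y ^ n = (((y + x * d) ^ n - (y - x * d) ^ n) / (2 * d)) • A +
        (((y + x * d) ^ n + (y - x * d) ^ n) / 2) • (1 : Matrix (Fin 2) (Fin 2) ℝ) := by
      intro n
      induction n with
      | zero => simp
      | succ n ih =>
        rw [pow_succ, ih, hYA]
        simp only [add_mul, mul_add, smul_mul_smul_comm, hAA, mul_one, one_mul, smul_smul]
        match_scalars
        · field_simp; ring
        · field_simp; ring
    have hx0 : x = 0 := by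
      rw [hpow k] at hYk
      obtain ⟨h1, h2, h3⟩ := hYk
      set α := ((y + x * d) ^ k - (y - x * d) ^ k) / (2 * d) with hα
      simp [h11, ← hp, ← hq, ← hr] at h1 h2 h3
      have hα0 : α = 0 := by
        have h3' : α * p = 0 := by linarith
        have : α * d ^ 2 = 0 := by
          rw [hd2]; linear_combination p * h3' + (by
            rcases h1 with h | h <;> simp [h] : α * (q * r) = 0)
        exact (mul_eq_zero.mp this).resolve_right hdne
      rw [hα, div_eq_zero_iff] at hα0
      have h4 := sub_eq_zero.mp (hα0.resolve_right (by positivity))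
      have h5 := hk.strictMono_pow.injective h4
      have : x * d = 0 := by linarith
      exact (mul_eq_zero.mp this).resolve_right hd.ne'
    refine ⟨by rw [y01, hx0, zero_mul], by rw [y10, hx0, zero_mul], ?_⟩
    rw [hx0] at y00; linarith
  · have htY : Y 0 0 + Y 1 1 = 0 := by
      have : (Y 0 0 + Y 1 1) * d ^ 2 = 0 := by
        rw [hd2]
        linear_combination (p / 2) * (m00 - m11) + r * m01
      exact (mul_eq_zero.mp this).resolve_right hdne
    have hYY : Y * Y = (-Y.det) • (1 : Matrix (Fin 2) (Fin 2) ℝ) := by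
      have h11' : Y 1 1 = - Y 0 0 := by linarith
      ext i j
      fin_cases i <;> fin_cases j <;>
        simp [Matrix.mul_apply, Fin.sum_univ_two, h11', Matrix.det_fin_two] <;> ring
    obtain ⟨j, rfl⟩ := hk
    rw [pow_succ, pow_mul, pow_two, hYY, _root_.smul_pow, one_pow, smul_mul_assoc, one_mul] at hYk
    obtain ⟨h1, h2, h3⟩ := hYk
    have hc : (-Y.det) ^ j ≠ 0 := pow_ne_zero _ (neg_ne_zero.mpr hY)
    simp only [Matrix.smul_apply, smul_eq_mul] at h1 h2 h3
    exact ⟨(mul_eq_zero.mp h1).resolve_left hc, (mul_eq_zero.mp h2).resolve_left hc,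
      mul_left_cancel₀ hc h3⟩

lemma mk_eq_mk_iff (Y Z : GL (Fin 2) ℝ) :
    (QuotientGroup.mk Y : PGL) = QuotientGroup.mk Z ↔ ∃ l : ℝ, Y.val = l • Z.val := by
  have h : (QuotientGroup.mk Y : PGL) = QuotientGroup.mk Z ↔
      (QuotientGroup.mk (Z⁻¹ * Y) : PGL) = 1 := by
    rw [QuotientGroup.mk_mul, QuotientGroup.mk_inv, inv_mul_eq_one, eq_comm]
  rw [h, mk_eq_one_iff]
  constructor
  · intro hs
    refine ⟨(Z⁻¹ * Y).val 0 0, ?_⟩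
    have h1 : Y = Z * (Z⁻¹ * Y) := by group
    have h2 := congrArg Units.val h1
    rw [Units.val_mul, hs.eq, mul_smul_comm, mul_one] at h2
    exact h2
  · rintro ⟨l, hl⟩
    rw [Units.val_mul, hl, mul_smul_comm, ← Units.val_mul, inv_mul_cancel]
    simp [IsScal]

/-! ### A family of projective representations

For `s, t` with `m = m(s,t)` odd and `w ≠ 0` the matrices `S = diag(1, -1)`, the reflection `T` with
`ST` a rotation of angle `π / m`, and `U = (0 w; 1 0)` are involutions in `PGL₂(ℝ)` with
`(ST)^m = (SU)² = 1`. -/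

/-- The reflection `S`. -/
def matS (R : Type*) [CommRing R] : Matrix (Fin 2) (Fin 2) R := !![1, 0; 0, -1]

/-- The reflection `T` with prescribed cosine and sine. -/
def matT {R : Type*} [CommRing R] (c d : R) : Matrix (Fin 2) (Fin 2) R := !![c, d; d, -c]

/-- The projective involution `U`. -/
def matU {R : Type*} [CommRing R] (w : R) : Matrix (Fin 2) (Fin 2) R := !![0, w; 1, 0]

/-- `S` as an invertible matrix. -/
def glS : GL (Fin 2) ℝ := Matrix.GeneralLinearGroup.mkOfDetNeZero (matS ℝ) (by
  simp [matS, Matrix.det_fin_two])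

/-- `T` as an invertible matrix. -/
def glT (θ : ℝ) : GL (Fin 2) ℝ :=
  Matrix.GeneralLinearGroup.mkOfDetNeZero (matT (Real.cos θ) (Real.sin θ)) (by
    simp only [matT, Matrix.det_fin_two_of]
    nlinarith [Real.sin_sq_add_cos_sq θ])

/-- `U` as an invertible matrix. -/
def glU (w : ℝ) (hw : w ≠ 0) : GL (Fin 2) ℝ :=
  Matrix.GeneralLinearGroup.mkOfDetNeZero (matU w) (by simp [matU, Matrix.det_fin_two, hw])

lemma glS_val : glS.val = matS ℝ := rfl
lemma glT_val (θ : ℝ) : (glT θ).val = matT (Real.cos θ) (Real.sin θ) := rfl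
lemma glU_val (w : ℝ) (hw : w ≠ 0) : (glU w hw).val = matU w := rfl

lemma glS_sq : (QuotientGroup.mk glS : PGL) * QuotientGroup.mk glS = 1 := by
  rw [← QuotientGroup.mk_mul, mk_eq_one_iff, Units.val_mul, glS_val]
  simp [IsScal, matS]

lemma glT_sq (θ : ℝ) : (QuotientGroup.mk (glT θ) : PGL) * QuotientGroup.mk (glT θ) = 1 := by
  rw [← QuotientGroup.mk_mul, mk_eq_one_iff, Units.val_mul, glT_val]
  simp [IsScal, matT]
  refine ⟨?_, ?_, ?_⟩ <;> ring

lemma glU_sq (w : ℝ) (hw : w ≠ 0) :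
    (QuotientGroup.mk (glU w hw) : PGL) * QuotientGroup.mk (glU w hw) = 1 := by
  rw [← QuotientGroup.mk_mul, mk_eq_one_iff, Units.val_mul, glU_val]
  simp [IsScal, matU]

lemma glSU_sq (w : ℝ) (hw : w ≠ 0) :
    ((QuotientGroup.mk glS : PGL) * QuotientGroup.mk (glU w hw)) ^ 2 = 1 := by
  rw [← QuotientGroup.mk_mul, ← QuotientGroup.mk_pow, mk_eq_one_iff, Units.val_pow_eq_pow_val,
    Units.val_mul, glU_val, glS_val]
  simp [IsScal, matU, matS, pow_two]

lemma glST_pow (θ : ℝ) (n : ℕ) : ((glS * glT θ) ^ n).val =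
    !![Real.cos (n * θ), Real.sin (n * θ); -Real.sin (n * θ), Real.cos (n * θ)] := by
  induction n with
  | zero => simp [Matrix.one_fin_two]
  | succ n ih =>
    rw [pow_succ, Units.val_mul, ih, Units.val_mul, glS_val, glT_val]
    have : ((n + 1 : ℕ) : ℝ) * θ = n * θ + θ := by push_cast; ring
    rw [this, Real.cos_add, Real.sin_add]
    ext i j
    fin_cases i <;> fin_cases j <;> simp [matS, matT] <;> ring

/-- The image of `ST` in `PGL₂(ℝ)` has order `m`. -/
lemma glST_pow_eq_one_iff {m : ℕ} (hm : m ≠ 0) (n : ℕ) :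
    ((QuotientGroup.mk glS : PGL) * QuotientGroup.mk (glT (Real.pi / m))) ^ n = 1 ↔ m ∣ n := by
  rw [← QuotientGroup.mk_mul, ← QuotientGroup.mk_pow, mk_eq_one_iff, glST_pow]
  have hm' : (m : ℝ) ≠ 0 := by exact_mod_cast hm
  have : IsScal !![Real.cos (n * (Real.pi / m)), Real.sin (n * (Real.pi / m));
      -Real.sin (n * (Real.pi / m)), Real.cos (n * (Real.pi / m))] ↔
      Real.sin (n * (Real.pi / m)) = 0 := by simp [IsScal]
  rw [this, Real.sin_eq_zero_iff]
  constructor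
  · rintro ⟨k, hk⟩
    have h1 : (k : ℝ) * m = n := by
      field_simp at hk
      exact hk
    have h2 : k * (m : ℤ) = n := by exact_mod_cast h1
    exact Int.natCast_dvd_natCast.mp ⟨k, by rw [← h2, mul_comm]⟩
  · rintro ⟨k, rfl⟩
    refine ⟨k, ?_⟩
    push_cast
    field_simp

/-- The hypotheses under which `W` maps to the extended triangle group: all even `m(i,j)` are two,
being odd is transitive, `{s, t}` is an odd component, `t` satisfies no further relation, and `u` lies
in another odd component. -/
structure FreeEdge (M : CoxeterMatrix B) (s t u : B) : Prop where
  even : ∀ i j, M i j ≠ 0 → Even (M i j) → M i j = 2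
  trans : ∀ i j k, Odd (M i j) → Odd (M j k) → Odd (M i k)
  ne : s ≠ t
  odd : Odd (M s t)
  component : ∀ j, Odd (M s j) → j = s ∨ j = t
  free : ∀ j, j ≠ s → j ≠ t → M t j = 0
  other : ¬ Odd (M s u)

namespace FreeEdge

variable {s t u : B}

lemma ne_zero (D : FreeEdge M s t u) : M s t ≠ 0 := by
  intro h; have := D.odd; rw [h] at this; simp at this

lemma not_odd_left (D : FreeEdge M s t u) : ¬ Odd (M u s) := fun h => D.other (odd_symm h)

lemma not_odd_right (D : FreeEdge M s t u) : ¬ Odd (M u t) :=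
  fun h => D.other (D.trans _ _ _ D.odd (odd_symm h))

lemma liftable (D : FreeEdge M s t u) (w : ℝ) (hw : w ≠ 0) :
    M.IsLiftable (triGen M s t u (QuotientGroup.mk glS : PGL)
      (QuotientGroup.mk (glT (Real.pi / M s t))) (QuotientGroup.mk (glU w hw))) :=
  liftable_triGen D.even D.trans D.ne D.odd D.component D.free glS_sq (glT_sq _) (glU_sq w hw)
    ((glST_pow_eq_one_iff D.ne_zero _).mpr dvd_rfl) (glSU_sq w hw)

/-- The projective representation with parameter `w`. -/
def psi (D : FreeEdge M s t u) (w : ℝ) (hw : w ≠ 0) : W →* PGL := cs.lift ⟨_, D.liftable w hw⟩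

lemma psi_simple (D : FreeEdge M s t u) (w : ℝ) (hw : w ≠ 0) (j : B) :
    D.psi cs w hw (cs.simple j) = triGen M s t u (QuotientGroup.mk glS : PGL)
      (QuotientGroup.mk (glT (Real.pi / M s t))) (QuotientGroup.mk (glU w hw)) j :=
  cs.lift_apply_simple (D.liftable w hw) j

/-- The matrix of a generator, with the parameter as an indeterminate. -/
def polyGen (M : CoxeterMatrix B) (s t u j : B) : Matrix (Fin 2) (Fin 2) ℝ[X] :=
  if j = s then matS ℝ[X]
  else if j = t then matT (C (Real.cos (Real.pi / M s t))) (C (Real.sin (Real.pi / M s t)))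
  else if Odd (M u j) then matU X else 1

/-- The matrix of a word, with the parameter as an indeterminate. -/
def polyWord (M : CoxeterMatrix B) (s t u : B) (ω : List B) : Matrix (Fin 2) (Fin 2) ℝ[X] :=
  (ω.map (polyGen M s t u)).prod

lemma exists_lift_gen (D : FreeEdge M s t u) (w : ℝ) (hw : w ≠ 0) (j : B) :
    ∃ Y : GL (Fin 2) ℝ, Y.val = (evalRingHom w).mapMatrix (polyGen M s t u j) ∧
      D.psi cs w hw (cs.simple j) = QuotientGroup.mk Y := by
  rw [psi_simple]
  unfold triGen polyGen
  split_ifs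
  · refine ⟨glS, ?_, rfl⟩
    rw [glS_val]
    ext i j
    fin_cases i <;> fin_cases j <;> simp [matS]
  · refine ⟨glT _, ?_, rfl⟩
    rw [glT_val]
    ext i j
    fin_cases i <;> fin_cases j <;> simp [matT]
  · refine ⟨glU w hw, ?_, rfl⟩
    rw [glU_val]
    ext i j
    fin_cases i <;> fin_cases j <;> simp [matU]
  · exact ⟨1, by rw [map_one]; rfl, rfl⟩

lemma exists_lift (D : FreeEdge M s t u) (w : ℝ) (hw : w ≠ 0) (ω : List B) :
    ∃ Y : GL (Fin 2) ℝ, Y.val = (evalRingHom w).mapMatrix (polyWord M s t u ω) ∧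
      D.psi cs w hw (cs.wordProd ω) = QuotientGroup.mk Y := by
  induction ω with
  | nil => exact ⟨1, by simp [polyWord], by simp⟩
  | cons j ω ih =>
    obtain ⟨Y, hY, hY'⟩ := ih
    obtain ⟨Z, hZ, hZ'⟩ := D.exists_lift_gen cs w hw j
    refine ⟨Z * Y, ?_, ?_⟩
    · rw [Units.val_mul, hY, hZ, ← map_mul]
      simp [polyWord]
    · rw [wordProd_cons, map_mul, hY', hZ', QuotientGroup.mk_mul]

/-- For `w > 0` the sign of the determinant is the product of the two sign characters. -/
lemma det_sign (D : FreeEdge M s t u) {w : ℝ} (hw : 0 < w) (ω : List B) :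
    ∃ r : ℝ, 0 < r ∧ ((evalRingHom w).mapMatrix (polyWord M s t u ω)).det =
      r * (((chi cs D.trans s (cs.wordProd ω) *
        chi cs D.trans u (cs.wordProd ω) : ℤˣ) : ℤ) : ℝ) := by
  induction ω with
  | nil => exact ⟨1, one_pos, by simp [polyWord]⟩
  | cons j ω ih =>
    obtain ⟨r, hr, h⟩ := ih
    have hgen : ∃ q : ℝ, 0 < q ∧ ((evalRingHom w).mapMatrix (polyGen M s t u j)).det =
        q * (((chi cs D.trans s (cs.simple j) * chi cs D.trans u (cs.simple j) : ℤˣ) : ℤ) : ℝ) := by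
      rw [chi_simple, chi_simple]
      unfold polyGen
      by_cases h1 : j = s
      · subst h1
        refine ⟨1, one_pos, ?_⟩
        simp [D.not_odd_left, matS, Matrix.det_fin_two]
      by_cases h2 : j = t
      · subst h2
        refine ⟨1, one_pos, ?_⟩
        simp [D.not_odd_right, D.odd, h1, matT, Matrix.det_fin_two]
        nlinarith [Real.sin_sq_add_cos_sq (Real.pi / M s j)]
      have h3 : ¬ Odd (M s j) := fun h => (D.component j h).elim h1 h2
      by_cases h4 : Odd (M u j)
      · refine ⟨w, hw, ?_⟩
        simp [h1, h2, h3, h4, matU, Matrix.det_fin_two]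
      · refine ⟨1, one_pos, ?_⟩
        simp [h1, h2, h3, h4]
    obtain ⟨q, hq, h'⟩ := hgen
    refine ⟨q * r, mul_pos hq hr, ?_⟩
    have : polyWord M s t u (j :: ω) = polyGen M s t u j * polyWord M s t u ω := by
      simp [polyWord]
    rw [this, map_mul, Matrix.det_mul, h, h', wordProd_cons, map_mul, map_mul]
    push_cast
    ring

lemma psi_left (D : FreeEdge M s t u) (w : ℝ) (hw : w ≠ 0) :
    D.psi cs w hw (cs.simple s) = QuotientGroup.mk glS := by
  rw [psi_simple]; simp [triGen]

lemma psi_right (D : FreeEdge M s t u) (w : ℝ) (hw : w ≠ 0) :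
    D.psi cs w hw (cs.simple t) = QuotientGroup.mk (glT (Real.pi / M s t)) := by
  rw [psi_simple]; simp [triGen, D.ne.symm]

/-- At `w = -1` the matrix `U` is a quarter turn, which projectively commutes with `S` and `T`; hence
the representation factors, up to powers of `U`, through the retraction to `⟨s, t⟩`. -/
lemma psi_neg_one (D : FreeEdge M s t u) (g : W) : ∃ e : ℕ,
    D.psi cs (-1) (by norm_num) g = D.psi cs (-1) (by norm_num) (retr cs D.trans s g) *
      (QuotientGroup.mk (glU (-1) (by norm_num)) : PGL) ^ e := by
  set V : PGL := QuotientGroup.mk (glU (-1) (by norm_num)) with hV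
  have hS : Commute V (QuotientGroup.mk glS : PGL) := by
    rw [hV, Commute, SemiconjBy, ← QuotientGroup.mk_mul, ← QuotientGroup.mk_mul, mk_eq_mk_iff]
    refine ⟨-1, ?_⟩
    rw [Units.val_mul, Units.val_mul, glS_val, glU_val]
    ext i j
    fin_cases i <;> fin_cases j <;> simp [matS, matU]
  have hTV : Commute V (QuotientGroup.mk (glT (Real.pi / M s t)) : PGL) := by
    rw [hV, Commute, SemiconjBy, ← QuotientGroup.mk_mul, ← QuotientGroup.mk_mul, mk_eq_mk_iff]
    refine ⟨-1, ?_⟩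
    rw [Units.val_mul, Units.val_mul, glT_val, glU_val]
    ext i j
    fin_cases i <;> fin_cases j <;> simp [matT, matU]
  have hcomm : ∀ g : W, Commute V (D.psi cs (-1) (by norm_num) (retr cs D.trans s g)) := by
    intro g
    obtain ⟨n, h | h⟩ := retr_form cs D.trans s t D.odd D.component g
    · rw [h, map_zpow, map_mul, psi_left, psi_right]
      exact (hS.mul_right hTV).zpow_right n
    · rw [h, map_mul, map_zpow, map_mul, psi_left, psi_right]
      exact hS.mul_right ((hS.mul_right hTV).zpow_right n)
  induction g using cs.simple_induction_left with
  | one => exact ⟨0, by simp⟩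
  | mul_simple_left g k ih =>
    obtain ⟨e, he⟩ := ih
    rw [map_mul, map_mul, retr_simple, he]
    by_cases hk : Odd (M s k)
    · refine ⟨e, ?_⟩
      rw [if_pos hk, map_mul, mul_assoc]
    · have h1 : k ≠ s := by rintro rfl; simp at hk
      have h2 : k ≠ t := by rintro rfl; exact hk D.odd
      rw [if_neg hk, one_mul, psi_simple]
      unfold triGen
      rw [if_neg h1, if_neg h2]
      split_ifs
      · refine ⟨1 + e, ?_⟩
        rw [← mul_assoc, (hcomm g).eq, pow_add, pow_one, mul_assoc]
      · exact ⟨e, by rw [one_mul]⟩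

lemma psi_neg_one_ne_one (D : FreeEdge M s t u) {b : W} {k : ℕ} (hk : Odd k) (hb : b ^ k = 1)
    (hsb : retr cs D.trans s b ≠ 1) : D.psi cs (-1) (by norm_num) b ≠ 1 := by
  intro h1
  obtain ⟨e, he⟩ := D.psi_neg_one cs b
  have hUU : (QuotientGroup.mk (glU (-1) (by norm_num)) : PGL) ^ 2 = 1 := by
    rw [pow_two]; exact glU_sq _ _
  have hrb : retr cs D.trans s b ^ k = 1 := by rw [← map_pow, hb, map_one]
  have h2 : D.psi cs (-1) (by norm_num) (retr cs D.trans s b) = 1 := by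
    apply eq_one_of_coprime_pow (Nat.coprime_two_right.mpr hk)
    · rw [← map_pow, hrb, map_one]
    · rw [h1] at he
      rw [eq_inv_of_mul_eq_one_left he.symm, inv_pow, ← pow_mul, mul_comm, pow_mul, hUU, one_pow,
        inv_one]
  obtain ⟨n, hn⟩ := dihedral_odd (s := cs.simple s) (r := cs.simple s * cs.simple t) (by simp)
    (by simp) (retr_form cs D.trans s t D.odd D.component b) hk hrb
  rw [hn, map_zpow, map_mul, psi_left, psi_right, ← orderOf_dvd_iff_zpow_eq_one] at h2
  have hord : M s t ∣ orderOf ((QuotientGroup.mk glS : PGL) *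
      QuotientGroup.mk (glT (Real.pi / M s t))) :=
    (glST_pow_eq_one_iff D.ne_zero _).mp (pow_orderOf_eq_one _)
  apply hsb
  rw [hn, ← orderOf_dvd_iff_zpow_eq_one, orderOf_simple_mul]
  exact (Int.natCast_dvd_natCast.mpr hord).trans h2

/-- An element `b` of odd order which is nontrivial in `⟨s, t⟩` does not commute with an involution
`a` that is trivial in `⟨s, t⟩` and of negative sign at `u`: some specialization with `w > 0` keeps
`b` nontrivial, and there the
determinant of `a` is negative. -/
theorem not_commute (D : FreeEdge M s t u) {a b : W} {k : ℕ} (hk : Odd k) (hb : b ^ k = 1)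
    (ha : a ^ 2 = 1) (hab : a * b = b * a) (hsb : retr cs D.trans s b ≠ 1)
    (hsa : retr cs D.trans s a = 1) (hua : chi cs D.trans u a = -1) : False := by
  obtain ⟨α, rfl⟩ := cs.wordProd_surjective a
  obtain ⟨β, rfl⟩ := cs.wordProd_surjective b
  set P := polyWord M s t u β with hP
  have heval : ∀ w : ℝ, IsScal ((evalRingHom w).mapMatrix P) ↔
      (P 0 1).eval w = 0 ∧ (P 1 0).eval w = 0 ∧ (P 0 0 - P 1 1).eval w = 0 := by
    intro w
    simp [IsScal, sub_eq_zero]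
  obtain ⟨w, hw, hns⟩ : ∃ w : ℝ, 0 < w ∧ ¬ IsScal ((evalRingHom w).mapMatrix P) := by
    by_contra! hall
    have hzero : ∀ p : ℝ[X], (∀ w : ℝ, 0 < w → p.eval w = 0) → p = 0 := by
      intro p hp
      exact p.eq_zero_of_infinite_isRoot ((Set.Ioi_infinite (0 : ℝ)).mono fun w hw => hp w hw)
    obtain ⟨Y, hY, hY'⟩ := D.exists_lift cs (-1) (by norm_num) β
    apply D.psi_neg_one_ne_one cs hk hb hsb
    rw [hY', mk_eq_one_iff, hY, heval, hzero (P 0 1) fun w hw => ((heval w).mp (hall w hw)).1,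
      hzero (P 1 0) fun w hw => ((heval w).mp (hall w hw)).2.1,
      hzero (P 0 0 - P 1 1) fun w hw => ((heval w).mp (hall w hw)).2.2]
    simp
  obtain ⟨Y, hY, hY'⟩ := D.exists_lift cs w hw.ne' β
  obtain ⟨A, hA, hA'⟩ := D.exists_lift cs w hw.ne' α
  apply hns
  rw [hP, ← hY]
  obtain ⟨r, hr, hdet⟩ := D.det_sign cs hw α
  have hsa' : chi cs D.trans s (cs.wordProd α) = 1 := by rw [← chi_retr, hsa, map_one]
  obtain ⟨l, hl⟩ := (mk_eq_mk_iff (A * Y) (Y * A)).mp (by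
    rw [QuotientGroup.mk_mul, QuotientGroup.mk_mul, ← hA', ← hY', ← map_mul, hab, map_mul])
  refine isScal_of_commute (A := A.val) (l := l) (k := k) ?_ ?_ ?_ ?_ hk ?_
  · rw [hA, hdet, hsa', hua]; simp [hr]
  · rw [← Units.val_mul, ← mk_eq_one_iff, QuotientGroup.mk_mul, ← hA', ← map_mul, ← pow_two, ha,
      map_one]
  · exact ((Matrix.isUnit_iff_isUnit_det _).mp Y.isUnit).ne_zero
  · rw [← Units.val_mul, hl, Units.val_mul]
  · rw [← Units.val_pow_eq_pow_val, ← mk_eq_one_iff, QuotientGroup.mk_pow, ← hY', ← map_pow, hb,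
      map_one]

end FreeEdge

/-! ### Elements of even order -/

lemma chi_of_retr_ne_one {M : CoxeterMatrix B} (cs : CoxeterSystem M W)
    (hT : ∀ i j k, Odd (M i j) → Odd (M j k) → Odd (M i k)) {i t : B} (hit : Odd (M i t))
    (ht : ∀ j, Odd (M i j) → j = i ∨ j = t) {a : W} (ha : a ^ 2 = 1)
    (hne : retr cs hT i a ≠ 1) : chi cs hT i a = -1 := by
  obtain ⟨n, h | h⟩ := retr_form cs hT i t hit ht a
  · exfalso
    apply hne
    apply eq_one_of_coprime_pow (m := M i t) (n := 2) (Nat.coprime_two_right.mpr hit)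
    · rw [h]; exact zpow_pow_eq_one (by simp) n
    · rw [← map_pow, ha, map_one]
  · rw [← chi_retr, h, map_mul, map_zpow, map_mul, chi_simple, chi_simple]
    simp [hit]

/-- The group-theoretic core: if of each odd edge at least one end satisfies no further relation,
then an element of finite even order has order two. -/
theorem orderOf_eq_two {M : CoxeterMatrix B} (cs : CoxeterSystem M W)
    (hE : ∀ i j, M i j ≠ 0 → Even (M i j) → M i j = 2)
    (hT : ∀ i j k, Odd (M i j) → Odd (M j k) → Odd (M i k))
    (hP : ∀ i, ∃ t, Odd (M i t) ∧ ∀ j, Odd (M i j) → j = i ∨ j = t)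
    (hF : ∀ i j, i ≠ j → Odd (M i j) →
      (∀ k, k ≠ i → k ≠ j → M j k = 0) ∨ (∀ k, k ≠ i → k ≠ j → M i k = 0))
    (g : W) (h0 : orderOf g ≠ 0) (hev : Even (orderOf g)) : orderOf g = 2 := by
  obtain ⟨k, hk⟩ := even_iff_two_dvd.mp hev
  have hk0 : k ≠ 0 := by rintro rfl; exact h0 (by simpa using hk)
  have hpow : g ^ (2 * k) = 1 := by rw [← hk, pow_orderOf_eq_one]
  have hfin : ∀ n : ℕ, (g ^ n) ^ (2 * k) = 1 := fun n => by
    rw [← pow_mul, mul_comm n, pow_mul, hpow, one_pow]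
  have hmin : ∀ n, g ^ n = 1 → 2 * k ∣ n := fun n hn => hk ▸ orderOf_dvd_of_pow_eq_one hn
  rcases Nat.even_or_odd k with ⟨l, hl⟩ | hodd
  · exfalso
    have hne : g ^ k ≠ 1 := fun h => by
      have := Nat.le_of_dvd (by omega) (hmin k h); omega
    obtain ⟨i, hi⟩ := exists_retr_ne_one cs hT hE (g ^ k) (2 * k) (by omega) (hfin k) hne
    apply hi
    obtain ⟨t, hit, ht⟩ := hP i
    rw [hl, ← two_mul, mul_comm, pow_mul, map_pow]
    apply dihedral_sq_of_pow_four (s := cs.simple i) (r := cs.simple i * cs.simple t)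
      (N := M i t) (by simp) (by simp) (by simp) hit (retr_form cs hT i t hit ht _)
    rw [← map_pow, ← pow_mul, show l * 4 = 2 * k by omega, hpow, map_one]
  · by_contra hne2
    have hk1 : k ≠ 1 := by rintro rfl; exact hne2 (by simpa using hk)
    have hane : g ^ k ≠ 1 := fun h => by
      have := Nat.le_of_dvd (by omega) (hmin k h); omega
    have hbne : g ^ 2 ≠ 1 := fun h => by
      have := Nat.le_of_dvd (by omega) (hmin 2 h); omega
    have ha : (g ^ k) ^ 2 = 1 := by rw [← pow_mul, mul_comm, hpow]
    have hb : (g ^ 2) ^ k = 1 := by rw [← pow_mul, hpow]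
    have hab : g ^ k * g ^ 2 = g ^ 2 * g ^ k := (Commute.pow_pow_self g k 2).eq
    obtain ⟨i, hi⟩ := exists_retr_ne_one cs hT hE (g ^ 2) (2 * k) (by omega) (hfin 2) hbne
    obtain ⟨u, hu⟩ := exists_retr_ne_one cs hT hE (g ^ k) (2 * k) (by omega) (hfin k) hane
    obtain ⟨v, huv, hv⟩ := hP u
    have hua := chi_of_retr_ne_one cs hT huv hv ha hu
    obtain ⟨t, hit, ht⟩ := hP i
    have hia : retr cs hT i (g ^ k) = 1 := by
      apply dihedral_commute (s := cs.simple i) (r := cs.simple i * cs.simple t)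
        (N := M i t) (by simp) (by simp) (by simp) hit (retr_form cs hT i t hit ht _)
        (retr_form cs hT i t hit ht (g ^ 2)) hodd _ hi
      · rw [← map_pow, ha, map_one]
      · rw [← map_mul, hab, map_mul]
      · rw [← map_pow, hb, map_one]
    have hiu : ¬ Odd (M i u) := fun h => hu (by rw [← retr_eq_of_odd cs hT h, hia])
    have hne : i ≠ t := by
      rintro rfl
      apply hi
      obtain ⟨n, hn⟩ := dihedral_odd (s := cs.simple i) (r := cs.simple i * cs.simple i) (by simp)
        (by simp) (retr_form cs hT i i hit ht (g ^ 2)) hodd (by rw [← map_pow, hb, map_one])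
      rw [hn]; simp
    rcases hF i t hne hit with hfree | hfree
    · exact FreeEdge.not_commute cs ⟨hE, hT, hne, hit, ht, hfree, hiu⟩ hodd hb ha hab hi hia hua
    · have hti := odd_symm hit
      refine FreeEdge.not_commute (s := t) (t := i) (u := u) cs
        ⟨hE, hT, hne.symm, hti, fun j hj => (ht j (hT _ _ _ hit hj)).symm,
          fun j h1 h2 => hfree j h2 h1, fun h => hiu (hT _ _ _ hit h)⟩ hodd hb ha hab ?_ ?_ hua
      · rw [← retr_eq_of_odd cs hT hit]; exact hi
      · rw [← retr_eq_of_odd cs hT hit]; exact hia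

/-! ### Spherical subsets -/

lemma isSpherical_pair {M : CoxeterMatrix B} (cs : CoxeterSystem M W) {i j : B} (h : M i j = 2) :
    cs.IsSpherical {i, j} := by
  have hcomm : cs.simple i * cs.simple j = cs.simple j * cs.simple i := by
    have h1 : (cs.simple i * cs.simple j) * (cs.simple i * cs.simple j) = 1 := by
      rw [← pow_two, ← h]; exact cs.simple_mul_simple_pow i j
    rw [eq_inv_of_mul_eq_one_left h1, mul_inv_rev, inv_simple, inv_simple]
  let F : Set W := {1, cs.simple i, cs.simple j, cs.simple i * cs.simple j}
  have hF : F.Finite := by simp [F]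
  have hsub : (cs.parabolic {i, j} : Set W) ⊆ F := by
    intro w hw
    have hi : cs.simple i * cs.simple i = 1 := cs.simple_mul_simple_self i
    have hj : cs.simple j * cs.simple j = 1 := cs.simple_mul_simple_self j
    have hstep : ∀ x ∈ F, cs.simple i * x ∈ F ∧ cs.simple j * x ∈ F := by
      rintro x (rfl | rfl | rfl | rfl)
      · simp [F]
      · simp [F, hcomm]
      · simp [F]
      · constructor
        · simp [F]
        · rw [hcomm]; simp [F]
    induction hw using Subgroup.closure_induction_left with
    | one => simp [F]
    | mul_left x hx y _ ih =>
      rcases hx with ⟨k, rfl | rfl, rfl⟩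
      · exact (hstep y ih).1
      · exact (hstep y ih).2
    | inv_mul_cancel x hx y _ ih =>
      rcases hx with ⟨k, rfl | rfl, rfl⟩
      · rw [inv_simple]; exact (hstep y ih).1
      · rw [inv_simple]; exact (hstep y ih).2
  exact (hF.subset hsub).to_subtype

lemma exists_isMaxSpherical {M : CoxeterMatrix B} (cs : CoxeterSystem M W) {T : Set B}
    (h : cs.IsSpherical T) : ∃ U, T ⊆ U ∧ cs.IsMaxSpherical U := by
  obtain ⟨U, hTU, hU⟩ := (Set.toFinite {U : Set B | cs.IsSpherical U}).exists_le_maximal h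
  exact ⟨U, hTU, hU.prop, fun V hV hUV => (hU.eq_of_subset hV hUV).symm⟩

/-- If at most two maximal spherical subsets meet the maximal spherical pair `{s, t}`, then `s` and
`t` do not both commute with further generators. -/
lemma free_end {M : CoxeterMatrix B} (cs : CoxeterSystem M W) {s t u v : B}
    (h1 : cs.IsMaxSpherical {s, t})
    (h3 : {T : Set B | cs.IsMaxSpherical T ∧ (T ∩ {s, t}).Nonempty}.ncard ≤ 2)
    (hus : u ≠ s) (hut : u ≠ t) (hvs : v ≠ s) (hvt : v ≠ t)
    (hsu : M s u = 2) (htv : M t v = 2) : False := by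
  obtain ⟨U, hU, hUm⟩ := exists_isMaxSpherical cs (isSpherical_pair cs hsu)
  obtain ⟨V, hV, hVm⟩ := exists_isMaxSpherical cs (isSpherical_pair cs htv)
  have hsU : s ∈ U := hU (by simp)
  have huU : u ∈ U := hU (by simp)
  have htV : t ∈ V := hV (by simp)
  have hvV : v ∈ V := hV (by simp)
  have hU1 : U ≠ {s, t} := by
    rintro rfl
    rcases huU with h | h
    · exact hus h
    · exact hut h
  have hV1 : V ≠ {s, t} := by
    rintro rfl
    rcases hvV with h | h
    · exact hvs h
    · exact hvt h
  have hUV : U ≠ V := by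
    rintro rfl
    exact hU1 (h1.2 U hUm.1 (Set.insert_subset hsU (Set.singleton_subset_iff.mpr htV)))
  have hsub : ({U, V, {s, t}} : Set (Set B)) ⊆
      {T : Set B | cs.IsMaxSpherical T ∧ (T ∩ {s, t}).Nonempty} := by
    rintro T (rfl | rfl | rfl)
    · exact ⟨hUm, s, hsU, by simp⟩
    · exact ⟨hVm, t, htV, by simp⟩
    · exact ⟨h1, s, by simp⟩
  have h4 := Set.ncard_le_ncard hsub (Set.toFinite _)
  rw [Set.ncard_eq_three.mpr ⟨U, V, {s, t}, hUV, hU1, hV1, rfl⟩] at h4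
  omega

end

end CoxDeform

/-- Conditions (0)–(3) on `(W,S)` transfer through an isomorphism `φ : W → W'`:
the target system satisfies (0'): if `m'(s',t')` is even then `m'(s',t') = 2`. -/
theorem condition_zero_transfers {B B' : Type*} [Fintype B] [Fintype B']
    {W W' : Type*} [Group W] [Group W']
    {M : CoxeterMatrix B} (cs : CoxeterSystem M W)
    {M' : CoxeterMatrix B'} (cs' : CoxeterSystem M' W')
    (h0 : ∀ i j : B, orderOf (cs.simple i * cs.simple j) ≠ 0 →
      Even (orderOf (cs.simple i * cs.simple j)) → orderOf (cs.simple i * cs.simple j) = 2)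
    (h1 : ∀ i j : B, i ≠ j → Odd (orderOf (cs.simple i * cs.simple j)) →
      cs.IsMaxSpherical {i, j})
    (h2 : ¬ ∃ i j k : B, i ≠ j ∧ j ≠ k ∧ i ≠ k ∧
      Odd (orderOf (cs.simple i * cs.simple j)) ∧ Odd (orderOf (cs.simple j * cs.simple k)))
    (h3 : ∀ i j : B, i ≠ j → Odd (orderOf (cs.simple i * cs.simple j)) →
      {T : Set B | cs.IsMaxSpherical T ∧ (T ∩ {i, j}).Nonempty}.ncard ≤ 2)
    (φ : W ≃* W') :
    ∀ i' j' : B', orderOf (cs'.simple i' * cs'.simple j') ≠ 0 →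
      Even (orderOf (cs'.simple i' * cs'.simple j')) →
      orderOf (cs'.simple i' * cs'.simple j') = 2 := by
  classical
  simp only [CoxDeform.orderOf_simple_mul cs] at h0 h1 h2 h3
  have hT : ∀ i j k, Odd (M i j) → Odd (M j k) → Odd (M i k) := by
    intro i j k hij hjk
    by_cases e1 : i = j
    · subst e1; exact hjk
    by_cases e2 : j = k
    · subst e2; exact hij
    by_cases e3 : i = k
    · subst e3; simp
    exact absurd ⟨i, j, k, e1, e2, e3, hij, hjk⟩ h2
  have hP : ∀ i, ∃ t, Odd (M i t) ∧ ∀ j, Odd (M i j) → j = i ∨ j = t := by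
    intro i
    by_cases h : ∃ t, t ≠ i ∧ Odd (M i t)
    · obtain ⟨t, hti, ht⟩ := h
      refine ⟨t, ht, fun j hj => ?_⟩
      by_contra! hne
      exact h2 ⟨t, i, j, hti, hne.1.symm, hne.2.symm, CoxDeform.odd_symm ht, hj⟩
    · refine ⟨i, by simp, fun j hj => Or.inl ?_⟩
      by_contra hne
      exact h ⟨j, hne, hj⟩
  have hF : ∀ i j, i ≠ j → Odd (M i j) →
      (∀ k, k ≠ i → k ≠ j → M j k = 0) ∨ (∀ k, k ≠ i → k ≠ j → M i k = 0) := by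
    intro i j hij hodd
    by_contra! hcon
    obtain ⟨⟨v, hvi, hvj, hv⟩, ⟨u, hui, huj, hu⟩⟩ := hcon
    refine CoxDeform.free_end cs (h1 i j hij hodd) (h3 i j hij hodd) hui huj hvi hvj
      (h0 i u hu (Nat.not_odd_iff_even.mp fun h => ?_))
      (h0 j v hv (Nat.not_odd_iff_even.mp fun h => ?_))
    · exact h2 ⟨j, i, u, hij.symm, hui.symm, huj.symm, CoxDeform.odd_symm hodd, h⟩
    · exact h2 ⟨i, j, v, hij, hvj.symm, hvi.symm, hodd, h⟩
  intro i' j' hne hev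
  rw [← MulEquiv.orderOf_eq φ.symm] at hne hev ⊢
  exact CoxDeform.orderOf_eq_two cs h0 hT hP hF _ hne hev
end

section
/- Let (W,S) be a Coxeter system satisfying: (0) for all s,t ∈ S with m(s,t) even, m(s,t) = 2; (1) for all s ≠ t ∈ S with m(s,t) odd, {s,t} is a maximal spherical subset of S; (2) there is no three-element subset {s,t,u} ⊆ S such that m(s,t) and m(t,u) are both odd; (3) for all s ≠ t ∈ S with m(s,t) odd, the number of maximal spherical subsets of S intersecting {s,t} is at most two. Let (W',S') be a Coxeter system and suppose there exists a group isomorphism φ : W → W'. Then for each s' ≠ t' ∈ S' with m'(s',t') odd, {s',t'} is a maximal spherical subset of S'. -/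
namespace TitsRep

open Real

/-! ### The geometric representation -/

section Representation

variable {B : Type*} (M : CoxeterMatrix B)

/-- The entry `2⟨αᵢ, αⱼ⟩ = -2 cos (π / m(i,j))` of the Gram matrix of the canonical form.
An infinite `m(i,j)` is encoded as `0`, and then `π / 0 = 0` gives the required value `-2`. -/
noncomputable def gram (i j : B) : ℝ := -2 * cos (π / M i j)

/-- The simple root `αᵢ`, a standard basis vector. -/
noncomputable def root (i : B) : B → ℝ := open Classical in Pi.single i 1

lemma gram_self (i : B) : gram M i i = 2 := by simp [gram]

lemma gram_symm (i j : B) : gram M i j = gram M j i := by simp [gram, M.symmetric i j]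

lemma root_self (i : B) : root i i = 1 := by simp [root]

lemma root_of_ne {i j : B} (h : j ≠ i) : root i j = 0 := by simp [root, h]

lemma root_nonneg (i : B) : 0 ≤ root i := by
  classical
  intro k
  by_cases h : k = i
  · subst h; simp [root_self]
  · simp [root_of_ne h]

lemma two_le_of_ne {i j : B} (h : i ≠ j) (h0 : M i j ≠ 0) : 2 ≤ M i j := by
  have := M.off_diagonal i j h
  omega

lemma root_ne_zero (i : B) : root i ≠ 0 := fun h => by
  simpa [root_self] using congrFun h i

/-- The Chebyshev-type recursion giving the coefficients of roots in a rank two subsystem; for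
`c = -2 cos θ` its solution is `sin (n θ) / sin θ`. -/
def cheb (c : ℝ) : ℕ → ℝ
  | 0 => 0
  | 1 => 1
  | n + 2 => -c * cheb c (n + 1) - cheb c n

lemma cheb_cos (θ : ℝ) (n : ℕ) : cheb (-2 * cos θ) n * sin θ = sin (n * θ) := by
  induction n using Nat.twoStepInduction with
  | zero => simp [cheb]
  | one => simp [cheb]
  | more n ih1 ih2 =>
    have e1 : ((n + 2 : ℕ) : ℝ) * θ = (n + 1 : ℕ) * θ + θ := by push_cast; ring
    have e2 : (n : ℝ) * θ = (n + 1 : ℕ) * θ - θ := by push_cast; ring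
    rw [e2, sin_sub] at ih1
    rw [e1, sin_add]
    simp only [cheb]
    linear_combination 2 * cos θ * ih2 - ih1

lemma cheb_two (n : ℕ) : cheb (-2) n = n := by
  induction n using Nat.twoStepInduction with
  | zero => simp [cheb]
  | one => simp [cheb]
  | more n ih1 ih2 =>
    simp only [cheb, ih1, ih2]; push_cast; ring

lemma sin_pos_of_two_le {m : ℕ} (hm : 2 ≤ m) : 0 < sin (π / m) := by
  have : (2 : ℝ) ≤ m := by exact_mod_cast hm
  apply sin_pos_of_pos_of_lt_pi
  · have := pi_pos; positivity
  · rw [div_lt_iff₀ (by linarith)]; nlinarith [pi_pos]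

lemma cheb_gram_nonneg {i j : B} (h : i ≠ j) {n : ℕ} (hn : M i j = 0 ∨ n ≤ M i j) :
    0 ≤ cheb (gram M i j) n := by
  by_cases h0 : M i j = 0
  · have : gram M i j = -2 := by simp [gram, h0]
    rw [this, cheb_two]; positivity
  · have hs := sin_pos_of_two_le (two_le_of_ne M h h0)
    have hn := hn.resolve_left h0
    have hm : (0 : ℝ) < M i j := by exact_mod_cast Nat.pos_of_ne_zero h0
    have : 0 ≤ cheb (gram M i j) n * sin (π / M i j) := by
      rw [gram, cheb_cos]
      have hn' : (n : ℝ) ≤ M i j := by exact_mod_cast hn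
      apply sin_nonneg_of_nonneg_of_le_pi
      · have := pi_pos; positivity
      · rw [mul_div_assoc', div_le_iff₀ hm]; nlinarith [pi_pos]
    exact nonneg_of_mul_nonneg_left this hs

variable {M} in
lemma gram_nonpos {i j : B} (h : i ≠ j) : gram M i j ≤ 0 := by
  have := cheb_gram_nonneg M h (n := 2)
    (by have := M.off_diagonal i j h; omega)
  simpa [cheb] using this

variable {M} in
lemma gram_neg {i j : B} (h : i ≠ j) (h2 : M i j ≠ 2) : gram M i j < 0 := by
  rw [gram]
  have h1 := M.off_diagonal i j h
  suffices 0 < cos (π / M i j) by linarith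
  by_cases h0 : M i j = 0
  · simp [h0]
  · have h3 : (3 : ℝ) ≤ M i j := by exact_mod_cast (show 3 ≤ M i j by omega)
    apply cos_pos_of_mem_Ioo
    have := pi_pos
    constructor
    · have : 0 < π / M i j := by positivity
      linarith
    · rw [div_lt_div_iff₀ (by linarith) (by norm_num)]
      nlinarith

variable [Fintype B]

/-- The linear form `v ↦ 2⟨αᵢ, v⟩`. -/
noncomputable def coroot (i : B) : (B → ℝ) →ₗ[ℝ] ℝ := ∑ j, gram M i j • LinearMap.proj j

/-- The simple reflection `v ↦ v - 2⟨αᵢ, v⟩ αᵢ`. -/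
noncomputable def refl (i : B) : Module.End ℝ (B → ℝ) :=
  LinearMap.id - (coroot M i).smulRight (root i)

lemma coroot_root (i j : B) : coroot M i (root j) = gram M i j := by
  classical
  simp [coroot, root, Pi.single_apply]

lemma refl_apply (i : B) (v : B → ℝ) : refl M i v = v - coroot M i v • root i := by
  simp [refl]

lemma refl_root (i j : B) : refl M i (root j) = root j - gram M i j • root i := by
  rw [refl_apply, coroot_root]

lemma refl_root_self (i : B) : refl M i (root i) = -root i := by
  rw [refl_root, gram_self]; module

lemma refl_mul_self (i : B) : refl M i * refl M i = 1 := by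
  ext1 v
  simp only [Module.End.mul_apply, refl_apply, map_sub, map_smul, coroot_root, gram_self,
    Module.End.one_apply]
  module

lemma refl_mul_pow_root (i j : B) (n : ℕ) :
    ((refl M i * refl M j) ^ n) (root i) =
      cheb (gram M i j) (2 * n + 1) • root i + cheb (gram M i j) (2 * n) • root j := by
  induction n with
  | zero => simp [cheb]
  | succ n ih =>
    rw [pow_succ', Module.End.mul_apply, ih]
    simp only [Module.End.mul_apply, map_add, map_sub, map_smul, refl_root, gram_self,
      gram_symm M j i]
    rw [show 2 * (n + 1) + 1 = 2 * n + 1 + 2 by ring, show 2 * (n + 1) = 2 * n + 2 by ring]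
    simp only [cheb]
    module

/-- The braid relations hold: `σᵢσⱼ` fixes the common kernel of the two forms, which
complements the plane spanned by the two roots because the form is nondegenerate on it. -/
lemma refl_isLiftable : M.IsLiftable (refl M) := by
  intro i j
  by_cases hij : i = j
  · subst hij; simp [refl_mul_self]
  by_cases h0 : M i j = 0
  · simp [h0]
  set m := M i j with hm
  have hm2 := two_le_of_ne M hij h0
  have hs := sin_pos_of_two_le hm2
  have hfix : ∀ {i j : B}, i ≠ j → M i j = m → ((refl M i * refl M j) ^ m) (root i) = root i := by
    intro i j hij hm'
    have hmr : (m : ℝ) ≠ 0 := by exact_mod_cast h0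
    rw [refl_mul_pow_root]
    have h1 : cheb (gram M i j) (2 * m + 1) = 1 := by
      have := cheb_cos (π / m) (2 * m + 1)
      rw [show ((2 * m + 1 : ℕ) : ℝ) * (π / m) = π / m + 2 * π by push_cast; field_simp; ring,
        sin_add_two_pi] at this
      rw [gram, hm']
      exact mul_right_cancel₀ hs.ne' (this.trans (one_mul _).symm)
    have h2 : cheb (gram M i j) (2 * m) = 0 := by
      have := cheb_cos (π / m) (2 * m)
      rw [show ((2 * m : ℕ) : ℝ) * (π / m) = 2 * π by push_cast; field_simp,
        sin_two_pi] at this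
      rw [gram, hm']
      exact (mul_eq_zero.1 this).resolve_right hs.ne'
    rw [h1, h2]; simp
  have hi := hfix hij rfl
  have hj : ((refl M i * refl M j) ^ m) (root j) = root j := by
    have h := hfix (Ne.symm hij) (M.symmetric j i)
    have e1 : (refl M i * refl M j) * (refl M j * refl M i) = 1 := by
      rw [mul_assoc, ← mul_assoc (refl M j), refl_mul_self, one_mul, refl_mul_self]
    have e2 : (refl M j * refl M i) * (refl M i * refl M j) = 1 := by
      rw [mul_assoc, ← mul_assoc (refl M i), refl_mul_self, one_mul, refl_mul_self]
    have e : (refl M i * refl M j) ^ m * (refl M j * refl M i) ^ m = 1 := by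
      rw [← Commute.mul_pow (e1.trans e2.symm), e1, one_pow]
    nth_rw 1 [← h]
    rw [← Module.End.mul_apply, e, Module.End.one_apply]
  have hker : ∀ v, coroot M i v = 0 → coroot M j v = 0 →
      ((refl M i * refl M j) ^ m) v = v := by
    intro v h1 h2
    generalize m = n
    induction n with
    | zero => simp
    | succ n ih =>
      rw [pow_succ, Module.End.mul_apply, Module.End.mul_apply, refl_apply M j, h2, zero_smul,
        sub_zero, refl_apply M i, h1, zero_smul, sub_zero, ih]
  ext1 v
  rw [Module.End.one_apply]
  set c := gram M i j with hc
  have hd : 4 - c ^ 2 ≠ 0 := by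
    have : 4 - c ^ 2 = 4 * sin (π / m) ^ 2 := by
      rw [hc, gram, sin_sq]; ring
    rw [this]; positivity
  set p := coroot M i v
  set q := coroot M j v
  obtain ⟨a, b, hp, hq⟩ : ∃ a b : ℝ, 2 * a + c * b = p ∧ c * a + 2 * b = q := by
    refine ⟨(2 * p - c * q) / (4 - c ^ 2), (2 * q - c * p) / (4 - c ^ 2), ?_, ?_⟩ <;>
      field_simp <;> ring
  have hw := hker (v - a • root i - b • root j)
    (by simp only [map_sub, map_smul, coroot_root, gram_self, smul_eq_mul]; linarith)
    (by simp only [map_sub, map_smul, coroot_root, gram_self, smul_eq_mul, gram_symm M j i]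
        linarith)
  rw [map_sub, map_sub, map_smul, map_smul, hi, hj] at hw
  simpa using hw

end Representation

/-! ### Positivity of roots -/

section Positivity

variable {B W : Type*} [Group W] {M : CoxeterMatrix B} (cs : CoxeterSystem M W)

/-- Splitting off the longest alternating suffix in two generators `i`, `j` from an element that
does not have `i` as a right descent. -/
lemma exists_alternating_suffix (n : ℕ) : ∀ (w : W) (i j : B), cs.length w = n →
    ¬cs.IsRightDescent w i → ∃ (v : W) (k : ℕ),
      w = v * cs.wordProd (CoxeterSystem.alternatingWord i j k) ∧ cs.length w = cs.length v + k ∧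
      ¬cs.IsRightDescent v i ∧ ¬cs.IsRightDescent v j := by
  induction n with
  | zero =>
    intro w i j hw hi
    rw [cs.length_eq_zero_iff] at hw
    subst hw
    exact ⟨1, 0, by simp [CoxeterSystem.alternatingWord], by simp, hi,
      cs.not_isRightDescent_one j⟩
  | succ n ih =>
    intro w i j hw hi
    by_cases hj : cs.IsRightDescent w j
    · have hl := cs.isRightDescent_iff.1 hj
      obtain ⟨v, k, h1, h2, h3, h4⟩ := ih (w * cs.simple j) j i (by omega)
        (by rw [CoxeterSystem.IsRightDescent]; simp; omega)
      refine ⟨v, k + 1, ?_, by omega, h4, h3⟩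
      rw [CoxeterSystem.alternatingWord_succ, cs.wordProd_concat, ← mul_assoc, ← h1]
      simp
    · exact ⟨w, 0, by simp [CoxeterSystem.alternatingWord], by simp, hi, hj⟩

variable [Fintype B]

/-- The geometric representation of a Coxeter group. -/
noncomputable def rep : W →* Module.End ℝ (B → ℝ) := cs.lift ⟨refl M, refl_isLiftable M⟩

lemma rep_simple (i : B) : rep cs (cs.simple i) = refl M i :=
  cs.lift_apply_simple (refl_isLiftable M) i

lemma rep_mul_apply (g h : W) (v : B → ℝ) : rep cs (g * h) v = rep cs g (rep cs h v) := by
  rw [map_mul, Module.End.mul_apply]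

lemma rep_inv_apply (g : W) (v : B → ℝ) : rep cs g⁻¹ (rep cs g v) = v := by
  rw [← rep_mul_apply]; simp

lemma rep_apply_inv (g : W) (v : B → ℝ) : rep cs g (rep cs g⁻¹ v) = v := by
  rw [← rep_mul_apply]; simp

lemma rep_mul_simple_root (g : W) (i : B) :
    rep cs (g * cs.simple i) (root i) = -rep cs g (root i) := by
  rw [rep_mul_apply, rep_simple, refl_root_self, map_neg]

lemma rep_alternatingWord (i j : B) (k : ℕ) :
    rep cs (cs.wordProd (CoxeterSystem.alternatingWord i j k)) (root i) =
      cheb (gram M i j) (k + 1) • root (if Even k then i else j) +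
        cheb (gram M i j) k • root (if Even k then j else i) := by
  induction k with
  | zero => simp [CoxeterSystem.alternatingWord, cheb]
  | succ k ih =>
    rw [CoxeterSystem.alternatingWord_succ', cs.wordProd_cons, rep_mul_apply, ih, rep_simple]
    by_cases hk : Even k
    · simp only [hk, Nat.even_add_one, not_true_eq_false, if_true, if_false, map_add, map_smul,
        refl_root, gram_self, gram_symm M j i, cheb]
      module
    · simp only [hk, Nat.even_add_one, not_false_eq_true, if_true, if_false, map_add, map_smul,
        refl_root, gram_self, cheb]
      module

/-- A root `w αᵢ` is nonnegative whenever `ℓ(w sᵢ) > ℓ(w)`. -/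
lemma rep_root_nonneg (n : ℕ) : ∀ (w : W) (i : B), cs.length w = n →
    ¬cs.IsRightDescent w i → 0 ≤ rep cs w (root i) := by
  induction n using Nat.strong_induction_on with
  | _ n ih =>
    intro w i hw hi
    by_cases h1 : w = 1
    · subst h1; simpa using root_nonneg i
    obtain ⟨j, hj⟩ := cs.exists_rightDescent_of_ne_one h1
    have hij : i ≠ j := by rintro rfl; exact hi hj
    obtain ⟨v, k, hv, hl, hvi, hvj⟩ := exists_alternating_suffix cs n w i j hw hi
    have hk : k ≠ 0 := by
      rintro rfl
      simp only [CoxeterSystem.alternatingWord, cs.wordProd_nil, mul_one] at hv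
      exact hvj (hv ▸ hj)
    have pi := ih (cs.length v) (by omega) v i rfl hvi
    have pj := ih (cs.length v) (by omega) v j rfl hvj
    have hkM : M i j = 0 ∨ k + 1 ≤ M i j := by
      by_contra! hcon
      refine cs.not_isReduced_alternatingWord j i (m := k + 1)
        (by rw [M.symmetric]; exact hcon.1) (by rw [M.symmetric]; exact hcon.2) ?_
      have e : w * cs.simple i = v * cs.wordProd (CoxeterSystem.alternatingWord j i (k + 1)) := by
        rw [CoxeterSystem.alternatingWord_succ, cs.wordProd_concat, ← mul_assoc, ← hv]
      have h2 := cs.not_isRightDescent_iff.1 hi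
      rw [e] at h2
      have h3 := cs.length_mul_le v (cs.wordProd (CoxeterSystem.alternatingWord j i (k + 1)))
      have h4 := cs.length_wordProd_le (CoxeterSystem.alternatingWord j i (k + 1))
      rw [CoxeterSystem.length_alternatingWord] at h4
      rw [CoxeterSystem.IsReduced, CoxeterSystem.length_alternatingWord]
      omega
    have c1 := cheb_gram_nonneg M hij hkM
    have c2 := cheb_gram_nonneg M hij (n := k) (hkM.imp id (by omega))
    rw [hv, rep_mul_apply, rep_alternatingWord, map_add, map_smul, map_smul]
    split_ifs
    · exact add_nonneg (smul_nonneg c1 pi) (smul_nonneg c2 pj)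
    · exact add_nonneg (smul_nonneg c1 pj) (smul_nonneg c2 pi)

/-- The roots: all images of simple roots under the group. -/
def IsRoot (β : B → ℝ) : Prop := ∃ (w : W) (i : B), β = rep cs w (root i)

lemma isRoot_root (i : B) : IsRoot cs (root i) := ⟨1, i, by simp⟩

variable {cs}

lemma IsRoot.rep {β : B → ℝ} (h : IsRoot cs β) (g : W) : IsRoot cs (rep cs g β) := by
  obtain ⟨w, i, rfl⟩ := h
  exact ⟨g * w, i, by rw [rep_mul_apply]⟩

lemma IsRoot.neg {β : B → ℝ} (h : IsRoot cs β) : IsRoot cs (-β) := by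
  obtain ⟨w, i, rfl⟩ := h
  exact ⟨w * cs.simple i, i, by rw [rep_mul_simple_root]⟩

variable (cs)

lemma rep_root_nonpos {w : W} {i : B} (h : cs.IsRightDescent w i) : rep cs w (root i) ≤ 0 := by
  have h1 : ¬cs.IsRightDescent (w * cs.simple i) i := by
    rw [CoxeterSystem.IsRightDescent] at h ⊢
    simp; omega
  have := rep_root_nonneg cs _ _ i rfl h1
  rw [rep_mul_simple_root] at this
  simpa using this

variable {cs}

lemma IsRoot.nonneg_or_nonpos {β : B → ℝ} (h : IsRoot cs β) : 0 ≤ β ∨ β ≤ 0 := by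
  obtain ⟨w, i, rfl⟩ := h
  by_cases hd : cs.IsRightDescent w i
  · exact Or.inr (rep_root_nonpos cs hd)
  · exact Or.inl (rep_root_nonneg cs _ w i rfl hd)

lemma IsRoot.ne_zero {β : B → ℝ} (h : IsRoot cs β) : β ≠ 0 := by
  obtain ⟨w, i, rfl⟩ := h
  intro h0
  have := rep_inv_apply cs w (root i)
  rw [h0, map_zero] at this
  exact root_ne_zero i this.symm

variable (M) in
/-- The quadratic form `2⟨v, v⟩`. -/
noncomputable def quad (v : B → ℝ) : ℝ := ∑ i, v i * coroot M i v

lemma sum_mul_gram (v : B → ℝ) (i : B) : ∑ k, v k * gram M k i = coroot M i v := by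
  simp [coroot, gram_symm M _ i, mul_comm]

lemma quad_refl (i : B) (v : B → ℝ) : quad M (refl M i v) = quad M v := by
  classical
  simp only [quad, refl_apply, map_sub, map_smul, coroot_root, smul_eq_mul, Pi.sub_apply,
    Pi.smul_apply]
  set p := coroot M i v with hp
  have e : ∀ k, (v k - p * root i k) * (coroot M k v - p * gram M k i) =
      v k * coroot M k v - p * (v k * gram M k i) -
        root i k * (p * coroot M k v - p * p * gram M k i) := by intro k; ring
  simp only [e, Finset.sum_sub_distrib, ← Finset.mul_sum, sum_mul_gram]
  have e2 : ∑ k, root i k * (p * coroot M k v - p * p * gram M k i) =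
      p * coroot M i v - p * p * gram M i i := by
    simp [root, Pi.single_apply]
  rw [e2, gram_self, ← hp]
  ring

lemma quad_rep (w : W) (v : B → ℝ) : quad M (rep cs w v) = quad M v := by
  induction w using cs.simple_induction_left generalizing v with
  | one => simp
  | mul_simple_left w i ih => rw [rep_mul_apply, rep_simple, quad_refl, ih]

lemma quad_smul_root (c : ℝ) (i : B) : quad M (c • root i) = 2 * c ^ 2 := by
  classical
  simp only [quad, map_smul, coroot_root, smul_eq_mul, Pi.smul_apply]
  have : ∀ k, c * root i k * (c * gram M k i) = root i k * (c ^ 2 * gram M k i) := by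
    intro k; ring
  simp only [this]
  simp [root, Pi.single_apply, gram_self, mul_comm]

/-- A simple reflection permutes the positive roots other than its own simple root. -/
lemma IsRoot.refl_nonneg {β : B → ℝ} (h : IsRoot cs β) (hβ : 0 ≤ β) {i : B} (hi : β ≠ root i) :
    0 ≤ refl M i β := by
  have hr : IsRoot cs (refl M i β) := by rw [← rep_simple cs]; exact h.rep _
  by_cases hk : ∃ k, k ≠ i ∧ β k ≠ 0
  · obtain ⟨k, hki, hk0⟩ := hk
    refine hr.nonneg_or_nonpos.resolve_right fun hneg => ?_
    have h1 := hneg k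
    rw [refl_apply] at h1
    simp only [Pi.sub_apply, Pi.smul_apply, root_of_ne hki, smul_zero, sub_zero,
      Pi.zero_apply] at h1
    exact hk0 (le_antisymm h1 (hβ k))
  · push Not at hk
    exfalso
    -- `β` is a multiple of `αᵢ`, and comparing norms forces `β = αᵢ`
    have hc : β = β i • root i := by
      ext k
      by_cases hki : k = i
      · subst hki; simp [root_self]
      · simp [root_of_ne hki, hk k hki]
    obtain ⟨w, j, hw⟩ := h
    have hq : quad M β = 2 := by
      rw [hw, quad_rep, ← one_smul ℝ (root j), quad_smul_root]; norm_num
    rw [hc, quad_smul_root] at hq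
    have h1 : β i = 1 := by nlinarith [show 0 ≤ β i from hβ i]
    exact hi (by rw [hc, h1, one_smul])

variable (cs) in
/-- Each group element makes only finitely many positive roots negative. -/
lemma finite_inversions (w : W) :
    {β : B → ℝ | IsRoot cs β ∧ 0 ≤ β ∧ ¬0 ≤ rep cs w β}.Finite := by
  induction w using cs.simple_induction_right with
  | one =>
    convert Set.finite_empty
    ext β; simp
  | mul_simple_right w i ih =>
    refine ((ih.image (refl M i)).insert (root i)).subset ?_
    rintro β ⟨h1, h2, h3⟩
    by_cases hi : β = root i
    · exact Or.inl hi
    · refine Or.inr ⟨refl M i β, ⟨?_, h1.refl_nonneg h2 hi, ?_⟩, ?_⟩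
      · rw [← rep_simple cs]; exact h1.rep _
      · rwa [rep_mul_apply, rep_simple] at h3
      · rw [← Module.End.mul_apply, refl_mul_self, Module.End.one_apply]

end Positivity

/-! ### Finite subgroups are conjugate into finite parabolic subgroups -/

section FixedPoint

variable {B W : Type*} [Fintype B] [Group W] {M : CoxeterMatrix B} (cs : CoxeterSystem M W)

/-- A linear form negative on only finitely many positive roots can be moved into the closed
fundamental chamber: reflecting in a simple root where it is negative removes one such root. -/
lemma exists_dominant (n : ℕ) : ∀ y : (B → ℝ) →ₗ[ℝ] ℝ,
    {β | IsRoot cs β ∧ 0 ≤ β ∧ y β < 0}.Finite →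
    {β | IsRoot cs β ∧ 0 ≤ β ∧ y β < 0}.ncard = n →
    ∃ u : W, ∀ i, 0 ≤ y (rep cs u (root i)) := by
  induction n using Nat.strong_induction_on with
  | _ n ih =>
    intro y hfin hn
    by_cases hall : ∀ i, 0 ≤ y (root i)
    · exact ⟨1, by simpa using hall⟩
    push Not at hall
    obtain ⟨i, hi⟩ := hall
    set N := {β | IsRoot cs β ∧ 0 ≤ β ∧ y β < 0} with hN
    set N' := {β | IsRoot cs β ∧ 0 ≤ β ∧ (y ∘ₗ refl M i) β < 0} with hN'
    have hiN : root i ∈ N := ⟨isRoot_root cs i, root_nonneg i, hi⟩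
    have hsub : N' ⊆ refl M i '' (N \ {root i}) := by
      rintro β ⟨h1, h2, h3⟩
      rw [LinearMap.comp_apply] at h3
      have hβ : β ≠ root i := by
        rintro rfl
        rw [refl_root_self, map_neg] at h3
        linarith
      have hinv : refl M i (refl M i β) = β := by
        rw [← Module.End.mul_apply, refl_mul_self, Module.End.one_apply]
      refine ⟨refl M i β, ⟨⟨?_, h1.refl_nonneg h2 hβ, h3⟩, ?_⟩, hinv⟩
      · rw [← rep_simple cs]; exact h1.rep _
      · intro h4
        rw [Set.mem_singleton_iff] at h4
        rw [h4, refl_root_self] at hinv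
        have := h2 i
        rw [← hinv] at this
        simp [root_self] at this
        linarith
    have hdfin : (N \ {root i}).Finite := hfin.subset Set.sdiff_subset
    have hcard : N'.ncard < n := by
      calc N'.ncard ≤ (refl M i '' (N \ {root i})).ncard :=
            Set.ncard_le_ncard hsub (hdfin.image _)
        _ ≤ (N \ {root i}).ncard := Set.ncard_image_le hdfin
        _ < N.ncard := Set.ncard_sdiff_singleton_lt_of_mem hiN hfin
        _ = n := hn
    obtain ⟨u, hu⟩ := ih _ hcard (y ∘ₗ refl M i) ((hdfin.image _).subset hsub) rfl
    refine ⟨cs.simple i * u, fun k => ?_⟩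
    have := hu k
    rwa [LinearMap.comp_apply, ← rep_simple cs, ← rep_mul_apply] at this

/-- A linear form in the closed fundamental chamber is nonnegative on nonnegative vectors. -/
lemma dominant_nonneg {z : (B → ℝ) →ₗ[ℝ] ℝ} (hz : ∀ i, 0 ≤ z (root i)) {v : B → ℝ}
    (hv : 0 ≤ v) : 0 ≤ z v := by
  classical
  have e : v = ∑ i, v i • root i := by
    ext k
    simp [root, Pi.single_apply, Finset.sum_apply]
  rw [e, map_sum]
  refine Finset.sum_nonneg fun i _ => ?_
  rw [map_smul]
  exact mul_nonneg (hv i) (hz i)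

/-- If a group element fixes a dominant form, all its right descents are walls of that form. -/
lemma descent_of_fix {z : (B → ℝ) →ₗ[ℝ] ℝ} (hz : ∀ i, 0 ≤ z (root i)) {g : W}
    (hg : z ∘ₗ rep cs g = z) {i : B} (hi : cs.IsRightDescent g i) : z (root i) = 0 := by
  have h1 : z (rep cs g (root i)) = z (root i) := by rw [← LinearMap.comp_apply, hg]
  have h2 : 0 ≤ z (-rep cs g (root i)) :=
    dominant_nonneg hz (by simpa using rep_root_nonpos cs hi)
  rw [map_neg, h1] at h2
  exact le_antisymm (by linarith) (hz i)

lemma comp_refl_of_wall {z : (B → ℝ) →ₗ[ℝ] ℝ} {i : B} (hi : z (root i) = 0) :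
    z ∘ₗ refl M i = z := by
  ext1 v
  simp [refl_apply, hi]

/-- The stabiliser of a dominant form is generated by the simple reflections fixing it. -/
lemma mem_parabolic_of_fix {z : (B → ℝ) →ₗ[ℝ] ℝ} (hz : ∀ i, 0 ≤ z (root i)) (n : ℕ) :
    ∀ g : W, cs.length g = n → z ∘ₗ rep cs g = z → g ∈ cs.parabolic {i | z (root i) = 0} := by
  induction n using Nat.strong_induction_on with
  | _ n ih =>
    intro g hn hg
    by_cases h1 : g = 1
    · subst h1; exact one_mem _
    obtain ⟨i, hi⟩ := cs.exists_rightDescent_of_ne_one h1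
    have hzi := descent_of_fix cs hz hg hi
    have h2 : z ∘ₗ rep cs (g * cs.simple i) = z := by
      rw [map_mul, Module.End.mul_eq_comp, ← LinearMap.comp_assoc, hg, rep_simple,
        comp_refl_of_wall hzi]
    have h3 := ih _ (by rw [← hn]; exact hi) (g * cs.simple i) rfl h2
    have h4 : cs.simple i ∈ cs.parabolic {i | z (root i) = 0} :=
      Subgroup.subset_closure ⟨i, hzi, rfl⟩
    simpa using mul_mem h3 h4

lemma fix_of_mem_parabolic {z : (B → ℝ) →ₗ[ℝ] ℝ} {g : W}
    (hg : g ∈ cs.parabolic {i | z (root i) = 0}) : z ∘ₗ rep cs g = z := by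
  induction hg using Subgroup.closure_induction with
  | mem x hx =>
    obtain ⟨i, hi, rfl⟩ := hx
    rw [rep_simple, comp_refl_of_wall hi]
  | one => simp [Module.End.one_eq_id]
  | mul x y _ _ hx hy =>
    rw [map_mul, Module.End.mul_eq_comp, ← LinearMap.comp_assoc, hx, hy]
  | inv x _ hx =>
    nth_rw 1 [← hx]
    rw [LinearMap.comp_assoc, ← Module.End.mul_eq_comp, ← map_mul, mul_inv_cancel, map_one,
      Module.End.one_eq_id, LinearMap.comp_id]

/-- If a dominant form vanishes on only finitely many roots, its stabiliser is finite: it acts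
faithfully on those roots. -/
lemma isSpherical_of_finite {z : (B → ℝ) →ₗ[ℝ] ℝ} (hz : ∀ i, 0 ≤ z (root i))
    (hfin : {β | IsRoot cs β ∧ z β = 0}.Finite) :
    cs.IsSpherical {i | z (root i) = 0} := by
  have : Finite {β | IsRoot cs β ∧ z β = 0} := hfin
  let f : cs.parabolic {i | z (root i) = 0} → ({i | z (root i) = 0} → {β | IsRoot cs β ∧ z β = 0}) :=
    fun g i => ⟨rep cs g (root i), (isRoot_root cs _).rep _, by
      rw [← LinearMap.comp_apply, fix_of_mem_parabolic cs g.2]; exact i.2⟩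
  refine Finite.of_injective f fun g h hgh => ?_
  have hmem := mul_mem (inv_mem g.2) h.2
  have hone : (g : W)⁻¹ * h = 1 := by
    by_contra hne
    obtain ⟨i, hi⟩ := cs.exists_rightDescent_of_ne_one hne
    have hzi := descent_of_fix cs hz (fix_of_mem_parabolic cs hmem) hi
    have h1 : rep cs g (root i) = rep cs h (root i) :=
      congrArg Subtype.val (congrFun hgh ⟨i, hzi⟩)
    have h2 := rep_root_nonpos cs hi
    rw [rep_mul_apply, ← h1, rep_inv_apply] at h2
    have := h2 i
    simp [root_self] at this
    linarith
  exact Subtype.ext (inv_mul_eq_one.1 hone)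

/-- The sum of coordinates, a form that is positive on positive roots. -/
noncomputable def height : (B → ℝ) →ₗ[ℝ] ℝ := ∑ k, LinearMap.proj k

lemma height_pos {v : B → ℝ} (hv : 0 ≤ v) (h0 : v ≠ 0) : 0 < height v := by
  obtain ⟨k, hk⟩ := Function.ne_iff.1 h0
  simp only [height, LinearMap.sum_apply, LinearMap.proj_apply]
  exact Finset.sum_pos' (fun i _ => hv i) ⟨k, Finset.mem_univ _, lt_of_le_of_ne (hv k) (Ne.symm hk)⟩

/-- Tits: every finite subgroup is conjugate into a finite standard parabolic subgroup. -/
theorem exists_spherical_of_finite (F : Subgroup W) [Finite F] :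
    ∃ (u : W) (T : Set B), cs.IsSpherical T ∧ ∀ f ∈ F, u⁻¹ * f * u ∈ cs.parabolic T := by
  classical
  have : Fintype F := Fintype.ofFinite F
  -- the orbit sum of `height`: an `F`-invariant form
  let y : (B → ℝ) →ₗ[ℝ] ℝ := ∑ f : F, height ∘ₗ rep cs (f : W)
  have hy : ∀ v, y v = ∑ f : F, height (rep cs (f : W) v) := fun v => by simp [y]
  have hyF : ∀ f ∈ F, ∀ v, y (rep cs f v) = y v := by
    intro f hf v
    rw [hy, hy]
    exact Fintype.sum_equiv (Equiv.mulRight (⟨f, hf⟩ : F)) _ _ fun g => by simp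
  have hle : {β | IsRoot cs β ∧ 0 ≤ β ∧ y β ≤ 0}.Finite := by
    refine (Set.finite_iUnion fun f : F => finite_inversions cs (f : W)).subset ?_
    rintro β ⟨h1, h2, h3⟩
    rw [Set.mem_iUnion]
    by_contra! hcon
    have hpos : ∀ f : F, 0 < height (rep cs (f : W) β) := fun f => by
      have : 0 ≤ rep cs (f : W) β := by
        by_contra hneg
        exact hcon f ⟨h1, h2, hneg⟩
      exact height_pos this (h1.rep _).ne_zero
    rw [hy] at h3
    exact absurd h3 (not_le.2 (Finset.sum_pos (fun f _ => hpos f) ⟨1, Finset.mem_univ _⟩))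
  obtain ⟨u, hu⟩ := exists_dominant cs _ y
    (hle.subset fun β h => ⟨h.1, h.2.1, h.2.2.le⟩) rfl
  let z := y ∘ₗ rep cs u
  have hz : ∀ i, 0 ≤ z (root i) := hu
  have hzero : {β | IsRoot cs β ∧ y β = 0}.Finite := by
    refine (hle.union (hle.image Neg.neg)).subset ?_
    rintro β ⟨h1, h2⟩
    rcases h1.nonneg_or_nonpos with h | h
    · exact Or.inl ⟨h1, h, h2.le⟩
    · exact Or.inr ⟨-β, ⟨h1.neg, by simpa using h, by simp [h2]⟩, neg_neg β⟩
  have hzfin : {β | IsRoot cs β ∧ z β = 0}.Finite := by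
    refine (hzero.image (rep cs u⁻¹)).subset ?_
    rintro β ⟨h1, h2⟩
    exact ⟨rep cs u β, ⟨h1.rep u, h2⟩, rep_inv_apply cs u β⟩
  refine ⟨u, _, isSpherical_of_finite cs hz hzfin, fun f hf => ?_⟩
  refine mem_parabolic_of_fix cs hz _ _ rfl ?_
  refine LinearMap.ext fun v => ?_
  simp only [z, LinearMap.comp_apply]
  rw [← rep_mul_apply, show u * (u⁻¹ * f * u) = f * u by group, rep_mul_apply, hyF f hf]

end FixedPoint

/-! ### Products of three simple reflections -/

section RankThree

variable {B W : Type*} [Fintype B] [Group W] {M : CoxeterMatrix B} (cs : CoxeterSystem M W)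

lemma simple_injective : Function.Injective cs.simple := by
  intro i j h
  by_contra hij
  have h1 : refl M i (root i) = refl M j (root i) := by
    rw [← rep_simple cs, ← rep_simple cs, h]
  rw [refl_root_self, refl_root] at h1
  have := congrFun h1 i
  simp [root_self, root_of_ne hij] at this
  linarith

/-- A product of three distinct simple reflections is not an involution unless the outer two
commute. -/
lemma triple_sq_ne_one {i j k : B} (hij : i ≠ j) (hjk : j ≠ k) (hik : i ≠ k) (h2 : M i k ≠ 2) :
    (cs.simple i * cs.simple j * cs.simple k) ^ 2 ≠ 1 := by
  intro h
  have h1 : cs.simple i * cs.simple j * cs.simple k =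
      cs.simple k * cs.simple j * cs.simple i := by
    rw [sq] at h
    rw [eq_inv_of_mul_eq_one_left h]
    simp [mul_assoc]
  have h3 := congrFun (congrArg (fun g => rep cs g (root i)) h1) k
  simp only [rep_mul_apply, rep_simple, refl_root, map_sub, map_smul, gram_self, Pi.sub_apply,
    Pi.smul_apply, smul_eq_mul, root_self, root_of_ne hik.symm, root_of_ne hjk.symm] at h3
  have a1 := gram_neg hik h2
  have a2 := gram_nonpos (M := M) hij
  have a3 := gram_nonpos (M := M) hjk
  rw [gram_symm M k i, gram_symm M k j, gram_symm M j i] at h3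
  nlinarith [mul_nonneg_of_nonpos_of_nonpos a2 a3]

end RankThree

/-! ### Dihedral groups with odd rotation order -/

section Dihedral

variable {G : Type*} [Group G] {s t : G}

lemma conj_zpowers (hs : s * s = 1) (ht : t * t = 1) {z : G}
    (hz : z ∈ Subgroup.zpowers (s * t)) : s * z * s = z⁻¹ := by
  obtain ⟨n, rfl⟩ := hz
  have hs' : s⁻¹ = s := inv_eq_of_mul_eq_one_left hs
  have ht' : t⁻¹ = t := inv_eq_of_mul_eq_one_left ht
  have h := conj_zpow (a := s) (b := s * t) (i := n)
  rw [hs', ← mul_assoc, hs, one_mul] at h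
  rw [← h, ← inv_zpow, mul_inv_rev, hs', ht']

lemma mem_dihedral (hs : s * s = 1) (ht : t * t = 1) {g : G}
    (hg : g ∈ Subgroup.closure {s, t}) :
    g ∈ Subgroup.zpowers (s * t) ∨ s * g ∈ Subgroup.zpowers (s * t) := by
  have hc : ∀ z ∈ Subgroup.zpowers (s * t), s * z * s ∈ Subgroup.zpowers (s * t) := fun z hz => by
    rw [conj_zpowers hs ht hz]; exact inv_mem hz
  have hcancel : ∀ x : G, s * (s * x) = x := fun x => by rw [← mul_assoc, hs, one_mul]
  induction hg using Subgroup.closure_induction with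
  | mem x hx =>
    rcases hx with rfl | rfl
    · right; rw [hs]; exact one_mem _
    · right; exact Subgroup.mem_zpowers _
  | one => left; exact one_mem _
  | mul x y _ _ hx hy =>
    rcases hx with hx | hx <;> rcases hy with hy | hy
    · left; exact mul_mem hx hy
    · right
      have := mul_mem (hc x hx) hy
      simpa [mul_assoc, hcancel] using this
    · right; rw [← mul_assoc]; exact mul_mem hx hy
    · left
      have := mul_mem (hc _ hx) hy
      simpa [mul_assoc, hcancel] using this
  | inv x _ hx =>
    rcases hx with hx | hx
    · left; exact inv_mem hx
    · right
      have := hc _ (inv_mem hx)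
      have hs' : s⁻¹ = s := inv_eq_of_mul_eq_one_left hs
      simpa [mul_assoc, hs', hs] using this

lemma eq_one_of_sq_of_odd {r x : G} (hr : Odd (orderOf r)) (hx : x ∈ Subgroup.zpowers r)
    (h2 : x * x = 1) : x = 1 := by
  have h1 : orderOf x ∣ 2 := orderOf_dvd_of_pow_eq_one (by rw [sq, h2])
  have h3 : orderOf x ∣ orderOf r := by
    obtain ⟨n, rfl⟩ := hx
    exact orderOf_dvd_of_pow_eq_one
      (by rw [← zpow_natCast, ← zpow_mul, mul_comm, zpow_mul, zpow_natCast, pow_orderOf_eq_one,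
        one_zpow])
  have h4 : orderOf x ∣ 1 := by
    have := Nat.dvd_gcd h1 h3
    rwa [Nat.coprime_two_left.2 hr] at this
  exact orderOf_eq_one_iff.1 (Nat.dvd_one.1 h4)

/-- In a dihedral group with odd rotation order, the product of three involutions is again an
involution. -/
lemma triple_sq_eq_one (hs : s * s = 1) (ht : t * t = 1) (hr : Odd (orderOf (s * t))) {a b c : G}
    (ha : a ∈ Subgroup.closure {s, t}) (hb : b ∈ Subgroup.closure {s, t})
    (hc : c ∈ Subgroup.closure {s, t}) (ha2 : a * a = 1) (hb2 : b * b = 1) (hc2 : c * c = 1)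
    (ha1 : a ≠ 1) (hb1 : b ≠ 1) (hc1 : c ≠ 1) : (a * c * b) ^ 2 = 1 := by
  have key : ∀ x ∈ Subgroup.closure {s, t}, x * x = 1 → x ≠ 1 →
      s * x ∈ Subgroup.zpowers (s * t) := fun x hx h2 h1 =>
    (mem_dihedral hs ht hx).resolve_left fun hz => h1 (eq_one_of_sq_of_odd hr hz h2)
  have za := key a ha ha2 ha1
  have zb := key b hb hb2 hb1
  have zc := key c hc hc2 hc1
  have hcancel : ∀ x : G, s * (s * x) = x := fun x => by rw [← mul_assoc, hs, one_mul]
  have hs' : s⁻¹ = s := inv_eq_of_mul_eq_one_left hs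
  have h1 : s * (a * c * b) ∈ Subgroup.zpowers (s * t) := by
    have := mul_mem (mul_mem za (inv_mem zc)) zb
    have hc' : c⁻¹ = c := inv_eq_of_mul_eq_one_left hc2
    simpa [mul_assoc, hs', hc', hcancel] using this
  have h2 := conj_zpowers hs ht h1
  rw [hcancel, mul_inv_rev, hs'] at h2
  have h3 : a * c * b = (a * c * b)⁻¹ := mul_right_cancel h2
  rw [sq]
  nth_rw 1 [h3]
  exact inv_mul_cancel _

lemma isSpherical_pair {B W : Type*} [Group W] {M : CoxeterMatrix B} (cs : CoxeterSystem M W)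
    {i j : B} (h : Odd (orderOf (cs.simple i * cs.simple j))) : cs.IsSpherical {i, j} := by
  set r := cs.simple i * cs.simple j with hr
  have hfin : (Subgroup.zpowers r : Set W).Finite :=
    finite_zpowers.2 (orderOf_pos_iff.1 h.pos)
  refine (hfin.union (hfin.image (cs.simple i * ·))).subset fun g hg => ?_
  rw [CoxeterSystem.parabolic, Set.image_pair] at hg
  rcases mem_dihedral (cs.simple_mul_simple_self i) (cs.simple_mul_simple_self j) hg with h | h
  · exact Or.inl h
  · exact Or.inr ⟨_, h, by simp⟩

end Dihedral

end TitsRep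

open TitsRep in
/-- Conditions (0)–(3) on `(W,S)` transfer through an isomorphism `φ : W → W'`:
the target system satisfies (1'): if `s' ≠ t'` and `m'(s',t')` is odd then
`{s',t'}` is a maximal spherical subset of `S'`. -/
theorem condition_one_transfers {B B' : Type*} [Fintype B] [Fintype B']
    {W W' : Type*} [Group W] [Group W']
    {M : CoxeterMatrix B} (cs : CoxeterSystem M W)
    {M' : CoxeterMatrix B'} (cs' : CoxeterSystem M' W')
    (h0 : ∀ i j : B, orderOf (cs.simple i * cs.simple j) ≠ 0 →
      Even (orderOf (cs.simple i * cs.simple j)) → orderOf (cs.simple i * cs.simple j) = 2)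
    (h1 : ∀ i j : B, i ≠ j → Odd (orderOf (cs.simple i * cs.simple j)) →
      cs.IsMaxSpherical {i, j})
    (h2 : ¬ ∃ i j k : B, i ≠ j ∧ j ≠ k ∧ i ≠ k ∧
      Odd (orderOf (cs.simple i * cs.simple j)) ∧ Odd (orderOf (cs.simple j * cs.simple k)))
    (h3 : ∀ i j : B, i ≠ j → Odd (orderOf (cs.simple i * cs.simple j)) →
      {T : Set B | cs.IsMaxSpherical T ∧ (T ∩ {i, j}).Nonempty}.ncard ≤ 2)
    (φ : W ≃* W') :
    ∀ i' j' : B', i' ≠ j' → Odd (orderOf (cs'.simple i' * cs'.simple j')) →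
      cs'.IsMaxSpherical {i', j'} := by
  intro i' j' hij' hodd
  have hne : ¬(cs'.simple i' * cs'.simple j') ^ 2 = 1 := by
    intro h
    have h4 := eq_one_of_sq_of_odd hodd (Subgroup.mem_zpowers _) (by rw [← sq, h])
    have h5 := eq_inv_of_mul_eq_one_left h4
    rw [cs'.inv_simple] at h5
    exact hij' (simple_injective cs' h5)
  have hM : M' i' j' ≠ 2 := fun h => hne (h ▸ cs'.simple_mul_simple_pow i' j')
  refine ⟨isSpherical_pair cs' hodd, fun U hU hsub => ?_⟩
  refine Set.Subset.antisymm (fun k' hk' => ?_) hsub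
  by_contra hk
  simp only [Set.mem_insert_iff, Set.mem_singleton_iff, not_or] at hk
  have hi' : i' ∈ U := hsub (by simp)
  have hj' : j' ∈ U := hsub (by simp)
  -- transport the finite group `W'_U` to `W` and conjugate it into a finite parabolic subgroup
  have : Finite (cs'.parabolic U) := hU
  have : Finite ((cs'.parabolic U).map φ.symm.toMonoidHom) :=
    Set.Finite.image φ.symm (s := (cs'.parabolic U : Set W')) (Set.toFinite _)
  obtain ⟨u, T, hT, hu⟩ := exists_spherical_of_finite cs
    ((cs'.parabolic U).map φ.symm.toMonoidHom)
  let ψ : W' ≃* W := φ.symm.trans (MulAut.conj u⁻¹)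
  have hψ : ∀ i ∈ U, ψ (cs'.simple i) ∈ cs.parabolic T := by
    intro i hi
    have := hu (φ.symm (cs'.simple i)) ⟨_, Subgroup.subset_closure ⟨i, hi, rfl⟩, rfl⟩
    simpa [ψ] using this
  have hψ2 : ∀ i, ψ (cs'.simple i) * ψ (cs'.simple i) = 1 := fun i => by
    rw [← map_mul, cs'.simple_mul_simple_self, map_one]
  have hψ1 : ∀ i, ψ (cs'.simple i) ≠ 1 := fun i h => by
    rw [map_eq_one_iff ψ ψ.injective] at h
    have := cs'.length_simple i
    rw [h, cs'.length_one] at this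
    omega
  by_cases hex : ∃ i ∈ T, ∃ j ∈ T, i ≠ j ∧ Odd (orderOf (cs.simple i * cs.simple j))
  · obtain ⟨i, hi, j, hj, hij, ho⟩ := hex
    have hTij : T = {i, j} := (h1 i j hij ho).2 T hT (by
      rintro x (rfl | rfl) <;> assumption)
    have hpar : cs.parabolic T = Subgroup.closure {cs.simple i, cs.simple j} := by
      rw [hTij, CoxeterSystem.parabolic, Set.image_pair]
    rw [hpar] at hψ
    have := triple_sq_eq_one (cs.simple_mul_simple_self i) (cs.simple_mul_simple_self j) ho
      (hψ i' hi') (hψ j' hj') (hψ k' hk') (hψ2 i') (hψ2 j') (hψ2 k') (hψ1 i') (hψ1 j') (hψ1 k')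
    rw [← map_mul, ← map_mul, ← map_pow, map_eq_one_iff ψ ψ.injective] at this
    exact triple_sq_ne_one cs' (Ne.symm hk.1) hk.2 hij' hM this
  · push Not at hex
    have : Finite (cs.parabolic T) := hT
    -- without odd pairs all generators in `T` commute
    have hcomm : ∀ x ∈ cs.simple '' T, ∀ y ∈ cs.simple '' T, x * y = y * x := by
      rintro _ ⟨i, hi, rfl⟩ _ ⟨j, hj, rfl⟩
      by_cases hij : i = j
      · rw [hij]
      have hfo : IsOfFinOrder (cs.simple i * cs.simple j) := by
        have hmem : cs.simple i * cs.simple j ∈ cs.parabolic T :=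
          mul_mem (Subgroup.subset_closure ⟨i, hi, rfl⟩) (Subgroup.subset_closure ⟨j, hj, rfl⟩)
        exact Submonoid.isOfFinOrder_coe.2 (isOfFinOrder_of_finite (⟨_, hmem⟩ : cs.parabolic T))
      have ho := h0 i j hfo.orderOf_pos.ne' (Nat.not_odd_iff_even.1 (hex i hi j hj hij))
      have hsq := pow_orderOf_eq_one (cs.simple i * cs.simple j)
      rw [ho, sq] at hsq
      have := eq_inv_of_mul_eq_one_left hsq
      simpa using this
    have hcen : cs.parabolic T ≤ Subgroup.centralizer (cs.simple '' T) :=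
      (Subgroup.closure_le _).2 fun x hx y hy => hcomm y hy x hx
    have hab := Subgroup.mem_centralizer_iff.1
      (Subgroup.closure_le_centralizer_centralizer _ (hψ i' hi')) _ (hcen (hψ j' hj'))
    apply hne
    rw [← map_eq_one_iff ψ ψ.injective, map_pow, map_mul, sq, mul_assoc,
      ← mul_assoc (ψ (cs'.simple j')), hab, mul_assoc, hψ2, mul_one, hψ2]
end
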